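/- arXiv:1602.03586 — 6 statements merged into one kernel-verified Lean document; each statement's English description precedes it below -/
import Mathlib

section
/- Let n ≥ 3 and s ≥ 2 be integers, let P be a non-trivial protocol on C_n with s colours and let X be uniformly distributed on Fix(P). For any three integers i, j, k with 1 ≤ i < j and j + 1 < k ≤ n, one has H_i^k ≤ H_i^j + H_{j+1}^k. -/
open Finset

/-- Base-`s` Shannon entropy of the random variable `g(X)` where `X` is uniformly
distributed on the finite set `F`. -/
noncomputable def entOf (s : ℕ) {α β : Type} [DecidableEq β] [Fintype β]
    (F : Finset α) (g : α → β) : ℝ :=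
  -∑ y : β, (((F.filter fun c => g c = y).card : ℝ) / (F.card : ℝ)) *
      Real.logb s (((F.filter fun c => g c = y).card : ℝ) / (F.card : ℝ))

/-- The fixed set of a protocol `f` on the cycle `C_n` with `s` colours:
all colourings `c` with `c i = f i (c (i-1), c (i+1))` for every vertex `i`
(vertex indices taken modulo `n`). -/
def cycleFix (n s : ℕ) [NeZero n] (f : ZMod n → Fin s × Fin s → Fin s) :
    Finset (ZMod n → Fin s) :=
  Finset.univ.filter fun c => ∀ i, c i = f i (c (i - 1), c (i + 1))

/-- `h(i₁,…,i_k)`: entropy (base `s`) of the tuple of coordinates of `X ∈_u F`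
indexed by the set `T` of integers (interpreted modulo `n`). -/
noncomputable def entT (n s : ℕ) [NeZero n] (F : Finset (ZMod n → Fin s))
    (T : Finset ℤ) : ℝ :=
  entOf s F (fun c => fun i : {x // x ∈ T} => c ((i.1 : ℤ) : ZMod n))

/-- `H_j^k = h(j,j+1,…,k-1) + h(j+1,j+2,…,k)`. -/
noncomputable def entH (n s : ℕ) [NeZero n] (F : Finset (ZMod n → Fin s))
    (j k : ℤ) : ℝ :=
  entT n s F (Finset.Icc j (k - 1)) + entT n s F (Finset.Icc (j + 1) k)

/-!
Two facts bound the entropy of a stretch of the cycle. Entropy is subadditive (Gibbs' inequality,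
comparing the joint law with the product of its marginals), and on the fixed set of a protocol the
colour of a vertex is a function of the colours of its two neighbours, so adjoining a vertex between
two known neighbours costs no entropy. Hence a stretch may be cut in two at an interior vertex,
which is dropped from both pieces. Cutting the first stretch in `H_i^k` at `j` and the second at
`j + 1` leaves exactly the four stretches that make up `H_i^j` and `H_{j+1}^k`.
-/

lemma mul_log_sub_mul_log_le_sub {p q : ℝ} (hp : 0 ≤ p) (hq : 0 ≤ q) (hpq : p ≠ 0 → q ≠ 0) :
    p * Real.log q - p * Real.log p ≤ q - p := by
  rcases hp.eq_or_lt with rfl | hp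
  · simpa using hq
  have hq : 0 < q := hq.lt_of_ne' (hpq hp.ne')
  calc p * Real.log q - p * Real.log p = p * Real.log (q / p) := by
        rw [Real.log_div hq.ne' hp.ne', mul_sub]
    _ ≤ p * (q / p - 1) := by gcongr; exact Real.log_le_sub_one_of_pos (div_pos hq hp)
    _ = q - p := by field_simp

lemma sum_mul_logb_le_sum_mul_logb {ι : Type*} {t : Finset ι} {p q : ι → ℝ} {b : ℝ} (hb : 1 < b)
    (hp : ∀ x ∈ t, 0 ≤ p x) (hq : ∀ x ∈ t, 0 ≤ q x) (hpq : ∀ x ∈ t, p x ≠ 0 → q x ≠ 0)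
    (hsum : ∑ x ∈ t, q x ≤ ∑ x ∈ t, p x) :
    ∑ x ∈ t, p x * Real.logb b (q x) ≤ ∑ x ∈ t, p x * Real.logb b (p x) := by
  simp only [Real.logb, mul_div_assoc', ← sum_div]
  refine div_le_div_of_nonneg_right ?_ (Real.log_pos hb).le
  rw [← sub_nonpos, ← sum_sub_distrib]
  calc ∑ x ∈ t, (p x * Real.log (q x) - p x * Real.log (p x)) ≤ ∑ x ∈ t, (q x - p x) :=
        sum_le_sum fun x hx ↦ mul_log_sub_mul_log_le_sub (hp x hx) (hq x hx) (hpq x hx)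
    _ ≤ 0 := by rw [sum_sub_distrib]; exact sub_nonpos.2 hsum

section UniformLaw

open scoped BigOperators

variable {α β γ : Type*} [DecidableEq β] [DecidableEq γ] {F : Finset α}

/-- The law of the random variable `g(X)` where `X` is uniformly distributed on the finite set `F`,
as a probability mass function `β → ℝ`; it is identically `0` when `F` is empty. -/
noncomputable def uniformLaw (F : Finset α) (g : α → β) (y : β) : ℝ :=
  (#{c ∈ F | g c = y} : ℝ) / #F

lemma uniformLaw_nonneg (F : Finset α) (g : α → β) (y : β) : 0 ≤ uniformLaw F g y := by
  unfold uniformLaw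
  positivity

lemma uniformLaw_apply_pos (g : α → β) {c : α} (hc : c ∈ F) : 0 < uniformLaw F g (g c) :=
  div_pos (Nat.cast_pos.2 (card_pos.2 ⟨c, mem_filter.2 ⟨hc, rfl⟩⟩))
    (Nat.cast_pos.2 (card_pos.2 ⟨c, hc⟩))

lemma uniformLaw_le_uniformLaw_of_imp {g : α → β} {g' : α → γ} {y : β} {z : γ}
    (h : ∀ c ∈ F, g c = y → g' c = z) : uniformLaw F g y ≤ uniformLaw F g' z := by
  unfold uniformLaw
  gcongr with c hc
  exact h c hc

lemma uniformLaw_mul_uniformLaw_ne_zero {g : α → β} {g' : α → γ} {y : β × γ}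
    (hy : uniformLaw F (fun c ↦ (g c, g' c)) y ≠ 0) :
    uniformLaw F g y.1 * uniformLaw F g' y.2 ≠ 0 := by
  have hpos : 0 < uniformLaw F (fun c ↦ (g c, g' c)) y := (uniformLaw_nonneg _ _ _).lt_of_ne' hy
  have hfst := hpos.trans_le <| uniformLaw_le_uniformLaw_of_imp fun c _ hc ↦ congrArg Prod.fst hc
  have hsnd := hpos.trans_le <| uniformLaw_le_uniformLaw_of_imp fun c _ hc ↦ congrArg Prod.snd hc
  exact (mul_pos hfst hsnd).ne'

lemma sum_uniformLaw_mul [Fintype β] (F : Finset α) (g : α → β) (φ : β → ℝ) :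
    ∑ y, uniformLaw F g y * φ y = 𝔼 c ∈ F, φ (g c) := by
  rw [expect_eq_sum_div_card, ← sum_fiberwise' F g φ, sum_div]
  refine sum_congr rfl fun y _ ↦ ?_
  rw [sum_const, nsmul_eq_mul, uniformLaw, div_mul_eq_mul_div]

lemma sum_uniformLaw [Fintype β] (hF : F.Nonempty) (g : α → β) : ∑ y, uniformLaw F g y = 1 := by
  simpa [hF] using sum_uniformLaw_mul F g 1

end UniformLaw

section Entropy

open scoped BigOperators

variable {α β γ : Type} [DecidableEq β] [Fintype β] [DecidableEq γ] [Fintype γ] {s : ℕ}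
  {F : Finset α}

lemma entOf_eq_neg_expect_logb (s : ℕ) (F : Finset α) (g : α → β) :
    entOf s F g = -𝔼 c ∈ F, Real.logb s (uniformLaw F g (g c)) :=
  congrArg Neg.neg (sum_uniformLaw_mul F g fun y ↦ Real.logb s (uniformLaw F g y))

lemma entOf_le_entOf_of_determines (hs : 1 < s) {g : α → β} {g' : α → γ}
    (h : ∀ c ∈ F, ∀ d ∈ F, g' c = g' d → g c = g d) : entOf s F g ≤ entOf s F g' := by
  rw [entOf_eq_neg_expect_logb, entOf_eq_neg_expect_logb, neg_le_neg_iff]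
  refine expect_le_expect fun c hc ↦ ?_
  exact Real.logb_le_logb_of_le (mod_cast hs) (uniformLaw_apply_pos g' hc)
    (uniformLaw_le_uniformLaw_of_imp fun d hd ↦ h d hd c hc)

lemma entOf_prodMk_le (hs : 1 < s) (hF : F.Nonempty) (g : α → β) (g' : α → γ) :
    entOf s F (fun c ↦ (g c, g' c)) ≤ entOf s F g + entOf s F g' := by
  let joint : β × γ → ℝ := uniformLaw F fun c ↦ (g c, g' c)
  let indep : β × γ → ℝ := fun y ↦ uniformLaw F g y.1 * uniformLaw F g' y.2
  have joint_nonneg (y : β × γ) : 0 ≤ joint y := uniformLaw_nonneg _ _ _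
  have indep_nonneg (y : β × γ) : 0 ≤ indep y :=
    mul_nonneg (uniformLaw_nonneg _ _ _) (uniformLaw_nonneg _ _ _)
  have sum_eq : ∑ y, indep y = ∑ y, joint y := by
    rw [Fintype.sum_prod_type, ← sum_mul_sum, sum_uniformLaw hF, sum_uniformLaw hF,
      sum_uniformLaw hF, mul_one]
  have gibbs : ∑ y, joint y * Real.logb s (indep y) ≤ ∑ y, joint y * Real.logb s (joint y) :=
    sum_mul_logb_le_sum_mul_logb (mod_cast hs) (fun y _ ↦ joint_nonneg y)
      (fun y _ ↦ indep_nonneg y) (fun _ _ ↦ uniformLaw_mul_uniformLaw_ne_zero) sum_eq.le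
  calc entOf s F (fun c ↦ (g c, g' c)) ≤ -∑ y, joint y * Real.logb s (indep y) :=
        neg_le_neg gibbs
    _ = -𝔼 c ∈ F, (Real.logb s (uniformLaw F g (g c)) + Real.logb s (uniformLaw F g' (g' c))) := by
        rw [sum_uniformLaw_mul]
        refine congrArg Neg.neg (expect_congr rfl fun c hc ↦ ?_)
        exact Real.logb_mul (uniformLaw_apply_pos g hc).ne' (uniformLaw_apply_pos g' hc).ne'
    _ = entOf s F g + entOf s F g' := by
        rw [expect_add_distrib, neg_add, entOf_eq_neg_expect_logb, entOf_eq_neg_expect_logb]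

end Entropy

section Cycle

variable {n s : ℕ} [NeZero n] {F : Finset (ZMod n → Fin s)} {f : ZMod n → Fin s × Fin s → Fin s}

lemma entT_le_entT_of_determines (hs : 1 < s) {T T' : Finset ℤ}
    (h : ∀ c ∈ F, ∀ d ∈ F, (∀ x ∈ T', c x = d x) → ∀ x ∈ T, c x = d x) :
    entT n s F T ≤ entT n s F T' :=
  entOf_le_entOf_of_determines hs fun c hc d hd hcd ↦
    funext fun x ↦ h c hc d hd (fun y hy ↦ congrFun hcd ⟨y, hy⟩) x x.2

lemma entT_union_le (hs : 1 < s) (hF : F.Nonempty) (T₁ T₂ : Finset ℤ) :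
    entT n s F (T₁ ∪ T₂) ≤ entT n s F T₁ + entT n s F T₂ := by
  refine le_trans (entOf_le_entOf_of_determines hs fun c _ d _ hcd ↦ funext fun x ↦ ?_)
    (entOf_prodMk_le hs hF _ _)
  obtain ⟨hcd₁, hcd₂⟩ := Prod.ext_iff.1 hcd
  rcases mem_union.1 x.2 with hx | hx
  · exact congrFun hcd₁ ⟨x, hx⟩
  · exact congrFun hcd₂ ⟨x, hx⟩

lemma eq_of_mem_cycleFix {c d : ZMod n → Fin s} (hc : c ∈ cycleFix n s f) (hd : d ∈ cycleFix n s f)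
    {v : ZMod n} (hpred : c (v - 1) = d (v - 1)) (hsucc : c (v + 1) = d (v + 1)) : c v = d v := by
  rw [(mem_filter.1 hc).2 v, (mem_filter.1 hd).2 v, hpred, hsucc]

lemma entT_insert_le_of_neighbors_mem (hs : 1 < s) (hF : F ⊆ cycleFix n s f) {T : Finset ℤ} {v : ℤ}
    (hpred : v - 1 ∈ T) (hsucc : v + 1 ∈ T) : entT n s F (insert v T) ≤ entT n s F T := by
  refine entT_le_entT_of_determines hs fun c hc d hd hcd ↦ (forall_mem_insert _ _ _).2 ⟨?_, hcd⟩
  refine eq_of_mem_cycleFix (hF hc) (hF hd) ?_ ?_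
  · exact_mod_cast hcd _ hpred
  · exact_mod_cast hcd _ hsucc

lemma entT_Icc_le_add (hs : 1 < s) (hF : F ⊆ cycleFix n s f) (hne : F.Nonempty) {a v b : ℤ}
    (hav : a < v) (hvb : v < b) :
    entT n s F (Icc a b) ≤ entT n s F (Icc a (v - 1)) + entT n s F (Icc (v + 1) b) := by
  have hsplit : Icc a b = insert v (Icc a (v - 1) ∪ Icc (v + 1) b) := by
    ext x
    simp only [mem_insert, mem_union, mem_Icc]
    omega
  calc entT n s F (Icc a b) ≤ entT n s F (Icc a (v - 1) ∪ Icc (v + 1) b) := by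
        rw [hsplit]
        refine entT_insert_le_of_neighbors_mem hs hF (mem_union_left _ ?_) (mem_union_right _ ?_)
        all_goals rw [mem_Icc]; omega
    _ ≤ _ := entT_union_le hs hne _ _

theorem cycle_guessing_stmt1_general (hs : 1 < s) (hF : F ⊆ cycleFix n s f) (hne : F.Nonempty)
    {i j k : ℤ} (hij : i < j) (hjk : j + 1 < k) :
    entH n s F i k ≤ entH n s F i j + entH n s F (j + 1) k := by
  have hfst : entT n s F (Icc i (k - 1)) ≤
      entT n s F (Icc i (j - 1)) + entT n s F (Icc (j + 1) (k - 1)) :=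
    entT_Icc_le_add hs hF hne hij (by omega)
  have hsnd : entT n s F (Icc (i + 1) k) ≤
      entT n s F (Icc (i + 1) j) + entT n s F (Icc (j + 1 + 1) k) := by
    simpa using entT_Icc_le_add hs hF hne (add_lt_add_left hij 1) hjk
  unfold entH
  linarith

end Cycle

/-- Let `n ≥ 3` and `s ≥ 2`, let `P` be a non-trivial protocol on
`C_n` with `s` colours and let `X` be uniform on `Fix(P)`.  For integers `i, j, k`
with `1 ≤ i < j` and `j + 1 < k ≤ n` we have `H_i^k ≤ H_i^j + H_{j+1}^k`. -/
theorem cycle_guessing_stmt1 (n s : ℕ) [NeZero n] (hn : 3 ≤ n) (hs : 2 ≤ s)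
    (f : ZMod n → Fin s × Fin s → Fin s)
    (hne : (cycleFix n s f).Nonempty)
    (i j k : ℤ) (hi : 1 ≤ i) (hij : i < j) (hjk : j + 1 < k) (hk : k ≤ n) :
    entH n s (cycleFix n s f) i k ≤
      entH n s (cycleFix n s f) i j + entH n s (cycleFix n s f) (j + 1) k :=
  cycle_guessing_stmt1_general hs Subset.rfl hne hij hjk
end

section
/- Let n ≥ 3 and s ≥ 2 be integers, let P be a non-trivial protocol on C_n with s colours and let X be uniformly distributed on Fix(P). Suppose 1 = d(1) < d(2) < ⋯ < d(k) = n is a sequence of positive integers with k ≥ 2 and d(i+1) ≥ d(i) + 2 for all i. Then 2·log_s fix(P) ≤ H_{d(1)}^{d(2)} + H_{d(2)+1}^{d(3)} + ⋯ + H_{d(k−1)+1}^{d(k)}. -/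
/-!
On a fixed point of a protocol, the colour of a vertex is a function of the colours of its two
neighbours. Hence two fixed points that agree on a vertex cover of the cycle are equal. Cut the
cycle into arcs of at least two vertices each. Deleting the last vertex of every arc leaves a vertex
cover, so subadditivity of entropy bounds `log fix(P)` by the sum of the entropies of the truncated
arcs. Deleting the first vertex of every arc instead gives a second such bound, and `2 log fix(P)`
is at most the sum of the two.
-/

open Finset

section Entropy

variable {s : ℕ} {α β : Type} [DecidableEq β] {F : Finset α} {g : α → β}

/-- The law of `g(X)` for `X` uniform on `F`: the probability that `g(X) = y`. It is identically
zero when `F` is empty. -/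
noncomputable def fiberProb (F : Finset α) (g : α → β) (y : β) : ℝ :=
  #{c ∈ F | g c = y} / #F

lemma fiberProb_nonneg (F : Finset α) (g : α → β) (y : β) : 0 ≤ fiberProb F g y := by
  unfold fiberProb
  positivity

lemma fiberProb_apply_pos (g : α → β) {c : α} (hc : c ∈ F) : 0 < fiberProb F g (g c) := by
  have hfiber : 0 < #{c' ∈ F | g c' = g c} := card_pos.2 ⟨c, mem_filter.2 ⟨hc, rfl⟩⟩
  have hF : 0 < #F := card_pos.2 ⟨c, hc⟩
  unfold fiberProb
  positivity

lemma card_mul_fiberProb (F : Finset α) (g : α → β) (y : β) :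
    (#F : ℝ) * fiberProb F g y = #{c ∈ F | g c = y} := by
  rcases F.eq_empty_or_nonempty with rfl | hF
  · simp
  · exact mul_div_cancel₀ _ (Nat.cast_ne_zero.2 hF.card_ne_zero)

lemma fiberProb_apply_of_injOn (hg : Set.InjOn g F) {c : α} (hc : c ∈ F) :
    fiberProb F g (g c) = (#F : ℝ)⁻¹ := by
  have hfiber : {c' ∈ F | g c' = g c} = {c} :=
    eq_singleton_iff_unique_mem.2
      ⟨mem_filter.2 ⟨hc, rfl⟩, fun c' hc' ↦ hg (mem_filter.1 hc').1 hc (mem_filter.1 hc').2⟩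
  rw [fiberProb, hfiber, card_singleton, Nat.cast_one, one_div]

variable [Fintype β]

lemma card_mul_sum_fiberProb_mul (F : Finset α) (g : α → β) (φ : β → ℝ) :
    (#F : ℝ) * ∑ y, fiberProb F g y * φ y = ∑ c ∈ F, φ (g c) := by
  rw [mul_sum, ← sum_fiberwise' F g φ]
  refine sum_congr rfl fun y _ ↦ ?_
  rw [← mul_assoc, card_mul_fiberProb, sum_const, nsmul_eq_mul]

lemma sum_fiberProb (hF : F.Nonempty) (g : α → β) : ∑ y, fiberProb F g y = 1 := by
  have hcard : (#F : ℝ) ≠ 0 := Nat.cast_ne_zero.2 hF.card_ne_zero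
  refine mul_left_cancel₀ hcard ?_
  simpa using card_mul_sum_fiberProb_mul F g 1

lemma card_mul_entOf (s : ℕ) (F : Finset α) (g : α → β) :
    #F * entOf s F g = -∑ c ∈ F, Real.logb s (fiberProb F g (g c)) := by
  rw [← card_mul_sum_fiberProb_mul F g fun y ↦ Real.logb s (fiberProb F g y), ← mul_neg]
  rfl

lemma entOf_of_injOn (s : ℕ) (hF : F.Nonempty) (hg : Set.InjOn g F) :
    entOf s F g = Real.logb s #F := by
  have hcard : (#F : ℝ) ≠ 0 := Nat.cast_ne_zero.2 hF.card_ne_zero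
  refine mul_left_cancel₀ hcard ?_
  rw [card_mul_entOf, sum_congr rfl fun c hc ↦ by rw [fiberProb_apply_of_injOn hg hc], sum_const,
    nsmul_eq_mul, Real.logb_inv, mul_neg, neg_neg]

lemma sum_fiberProb_mul_div_le (F : Finset α) (g : α → β) {q : β → ℝ} (hq : ∀ y, 0 ≤ q y) :
    ∑ y, fiberProb F g y * (q y / fiberProb F g y) ≤ ∑ y, q y := by
  refine sum_le_sum fun y _ ↦ ?_
  rcases eq_or_ne (fiberProb F g y) 0 with hy | hy
  · simpa [hy] using hq y
  · exact (mul_div_cancel₀ _ hy).le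

lemma gibbs_inequality (hs : 1 < s) {q : β → ℝ} (hq : ∀ y, 0 ≤ q y)
    (hqpos : ∀ c ∈ F, 0 < q (g c)) (hqsum : ∑ y, q y ≤ 1) :
    #F * entOf s F g ≤ -∑ c ∈ F, Real.logb s (q (g c)) := by
  set p := fiberProb F g
  have hrelative : ∑ c ∈ F, (Real.log (q (g c)) - Real.log (p (g c))) ≤ 0 := calc
    _ ≤ ∑ c ∈ F, (q (g c) / p (g c) - 1) := sum_le_sum fun c hc ↦ by
      have hp : 0 < p (g c) := fiberProb_apply_pos g hc
      rw [← Real.log_div (hqpos c hc).ne' hp.ne']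
      exact Real.log_le_sub_one_of_pos (div_pos (hqpos c hc) hp)
    _ = #F * (∑ y, p y * (q y / p y) - 1) := by
      rw [sum_sub_distrib, ← card_mul_sum_fiberProb_mul F g fun y ↦ q y / p y, sum_const,
        nsmul_eq_mul, mul_sub]
    _ ≤ 0 := mul_nonpos_of_nonneg_of_nonpos (Nat.cast_nonneg _)
      (sub_nonpos.2 ((sum_fiberProb_mul_div_le F g hq).trans hqsum))
  have hlog : 0 < Real.log s := Real.log_pos (Nat.one_lt_cast.2 hs)
  rw [card_mul_entOf, neg_le_neg_iff]
  simp only [Real.logb, ← sum_div]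
  rw [div_le_div_iff_of_pos_right hlog]
  rwa [sum_sub_distrib, sub_nonpos] at hrelative

end Entropy

section Subadditivity

variable {s : ℕ} {α ι : Type} [Fintype ι] {β : ι → Type} [∀ i, Fintype (β i)]
  [∀ i, DecidableEq (β i)] {F : Finset α}

lemma entOf_pi_le_sum [DecidableEq ι] (hs : 1 < s) (hF : F.Nonempty) (g : ∀ i, α → β i) :
    entOf s F (fun c i ↦ g i c) ≤ ∑ i, entOf s F (g i) := by
  have hcard : (0 : ℝ) < #F := Nat.cast_pos.2 hF.card_pos
  have hsum : ∑ y : ∀ i, β i, ∏ i, fiberProb F (g i) (y i) = 1 := by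
    rw [← Fintype.prod_sum fun i ↦ fiberProb F (g i)]
    exact prod_eq_one fun i _ ↦ sum_fiberProb hF (g i)
  refine le_of_mul_le_mul_left ?_ hcard
  calc #F * entOf s F (fun c i ↦ g i c)
      ≤ -∑ c ∈ F, Real.logb s (∏ i, fiberProb F (g i) (g i c)) :=
        gibbs_inequality (g := fun c i ↦ g i c) hs (q := fun y ↦ ∏ i, fiberProb F (g i) (y i))
          (fun y ↦ prod_nonneg fun i _ ↦ fiberProb_nonneg F (g i) (y i))
          (fun c hc ↦ prod_pos fun i _ ↦ fiberProb_apply_pos (g i) hc) hsum.le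
    _ = -∑ c ∈ F, ∑ i, Real.logb s (fiberProb F (g i) (g i c)) := by
        refine congrArg Neg.neg (sum_congr rfl fun c hc ↦ ?_)
        exact Real.logb_prod _ _ fun i _ ↦ (fiberProb_apply_pos (g i) hc).ne'
    _ = #F * ∑ i, entOf s F (g i) := by
        rw [sum_comm, mul_sum, ← sum_neg_distrib]
        exact sum_congr rfl fun i _ ↦ (card_mul_entOf s F (g i)).symm

lemma logb_card_le_sum_entOf (hs : 1 < s) (hF : F.Nonempty) {g : ∀ i, α → β i}
    (hg : Set.InjOn (fun c i ↦ g i c) F) : Real.logb s #F ≤ ∑ i, entOf s F (g i) := by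
  classical
  exact (entOf_of_injOn s hF hg).symm.trans_le (entOf_pi_le_sum hs hF g)

end Subadditivity

section VertexCover

variable {n : ℕ}

/-- On the set `F` of colourings of the cycle, the colour of each vertex is determined by the
colours of its two neighbours. Equivalently, `F` consists of fixed points of a common protocol. -/
def NeighbourDetermined {α : Type*} (F : Set (ZMod n → α)) : Prop :=
  ∀ ⦃c⦄, c ∈ F → ∀ ⦃c'⦄, c' ∈ F → ∀ z,
    c (z - 1) = c' (z - 1) → c (z + 1) = c' (z + 1) → c z = c' z

/-- `S` is a vertex cover of the cycle on `ZMod n`: it meets every edge `{z, z + 1}`. -/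
def IsCycleVertexCover (S : Set (ZMod n)) : Prop :=
  ∀ z, z ∈ S ∨ z + 1 ∈ S

lemma neighbourDetermined_cycleFix {s : ℕ} [NeZero n] (f : ZMod n → Fin s × Fin s → Fin s) :
    NeighbourDetermined (cycleFix n s f : Set (ZMod n → Fin s)) := by
  intro c hc c' hc' z hleft hright
  rw [(mem_filter.1 hc).2 z, (mem_filter.1 hc').2 z, hleft, hright]

lemma NeighbourDetermined.eq_of_eqOn {α : Type*} {F : Set (ZMod n → α)}
    (hdet : NeighbourDetermined F) {S : Set (ZMod n)} (hS : IsCycleVertexCover S)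
    {c c' : ZMod n → α} (hc : c ∈ F) (hc' : c' ∈ F) (h : Set.EqOn c c' S) : c = c' := by
  funext z
  by_cases hz : z ∈ S
  · exact h hz
  · have hleft : z - 1 ∈ S := (hS (z - 1)).resolve_right (by rwa [sub_add_cancel])
    have hright : z + 1 ∈ S := (hS z).resolve_left hz
    exact hdet hc hc' z (h hleft) (h hright)

lemma NeighbourDetermined.logb_card_le_sum_entT {s : ℕ} [NeZero n] {F : Finset (ZMod n → Fin s)}
    (hdet : NeighbourDetermined (F : Set (ZMod n → Fin s))) (hs : 1 < s) (hF : F.Nonempty)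
    {ι : Type} [Fintype ι] {T : ι → Finset ℤ}
    (hT : IsCycleVertexCover (⋃ i, ((↑) : ℤ → ZMod n) '' T i)) :
    Real.logb s #F ≤ ∑ i, entT n s F (T i) := by
  refine logb_card_le_sum_entOf hs hF fun c hc c' hc' h ↦ hdet.eq_of_eqOn hT hc hc' ?_
  intro z hz
  obtain ⟨i, x, hx, rfl⟩ := Set.mem_iUnion.1 hz
  exact congrFun (congrFun h i) ⟨x, hx⟩

end VertexCover

section Arcs

variable {n m : ℕ} {b : ℕ → ℤ}

lemma exists_mem_Ioc_succ_of_mem_Ioc {α : Type*} [LinearOrder α] {u : ℕ → α} {m : ℕ} {x : α}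
    (hx : x ∈ Set.Ioc (u 0) (u m)) : ∃ i < m, x ∈ Set.Ioc (u i) (u (i + 1)) := by
  induction m with
  | zero => simp at hx
  | succ m ih =>
    rcases le_or_gt x (u m) with hle | hlt
    · obtain ⟨i, hi, hxi⟩ := ih ⟨hx.1, hle⟩
      exact ⟨i, hi.trans m.lt_succ_self, hxi⟩
    · exact ⟨m, m.lt_succ_self, hlt, hx.2⟩

lemma exists_intCast_eq_and_mem_Ioc [NeZero n] (a : ℤ) (z : ZMod n) :
    ∃ x : ℤ, (x : ZMod n) = z ∧ x ∈ Set.Ioc a (a + n) := by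
  have hlt : ((z - a - 1).val : ℤ) < n := Nat.cast_lt.2 (ZMod.val_lt _)
  refine ⟨a + 1 + (z - a - 1).val, ?_, by omega, by omega⟩
  simp

lemma exists_intCast_eq_and_mem_arc [NeZero n] (hwrap : b m = b 0 + n) (z : ZMod n) :
    ∃ i : Fin m, ∃ x : ℤ, (x : ZMod n) = z ∧ b i < x ∧ x ≤ b (i + 1) := by
  obtain ⟨x, hxz, hx⟩ := exists_intCast_eq_and_mem_Ioc (b 0) z
  rw [← hwrap] at hx
  obtain ⟨i, hi, hxi⟩ := exists_mem_Ioc_succ_of_mem_Ioc hx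
  exact ⟨⟨i, hi⟩, x, hxz, hxi⟩

lemma isCycleVertexCover_arcs_dropLast [NeZero n] (hwrap : b m = b 0 + n)
    (hlen : ∀ i < m, b i + 2 ≤ b (i + 1)) :
    IsCycleVertexCover
      (⋃ i : Fin m, ((↑) : ℤ → ZMod n) '' (Icc (b i + 1) (b (i + 1) - 1) : Finset ℤ)) := by
  intro z
  simp only [Set.mem_iUnion]
  obtain ⟨i, x, hxz, hlo, hhi⟩ := exists_intCast_eq_and_mem_arc hwrap (z + 1)
  have hi := hlen i i.isLt
  rcases hhi.lt_or_eq with hlt | heq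
  · exact .inr ⟨i, x, mem_coe.2 (mem_Icc.2 ⟨by omega, by omega⟩), hxz⟩
  · exact .inl ⟨i, x - 1, mem_coe.2 (mem_Icc.2 ⟨by omega, by omega⟩), by simp [hxz]⟩

lemma isCycleVertexCover_arcs_dropFirst [NeZero n] (hwrap : b m = b 0 + n)
    (hlen : ∀ i < m, b i + 2 ≤ b (i + 1)) :
    IsCycleVertexCover
      (⋃ i : Fin m, ((↑) : ℤ → ZMod n) '' (Icc (b i + 1 + 1) (b (i + 1)) : Finset ℤ)) := by
  intro z
  simp only [Set.mem_iUnion]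
  obtain ⟨i, x, hxz, hlo, hhi⟩ := exists_intCast_eq_and_mem_arc hwrap z
  have hi := hlen i i.isLt
  rcases (Int.add_one_le_of_lt hlo).lt_or_eq with hlt | heq
  · exact .inl ⟨i, x, mem_coe.2 (mem_Icc.2 ⟨by omega, by omega⟩), hxz⟩
  · exact .inr ⟨i, x + 1, mem_coe.2 (mem_Icc.2 ⟨by omega, by omega⟩), by simp [hxz]⟩

theorem cycle_guessing_stmt4_general {s : ℕ} [NeZero n] (hs : 1 < s)
    {F : Finset (ZMod n → Fin s)} (hF : F.Nonempty)
    (hdet : NeighbourDetermined (F : Set (ZMod n → Fin s)))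
    (hwrap : b m = b 0 + n) (hlen : ∀ i < m, b i + 2 ≤ b (i + 1)) :
    2 * Real.logb s #F ≤ ∑ i ∈ range m, entH n s F (b i + 1) (b (i + 1)) := by
  have hlast := hdet.logb_card_le_sum_entT hs hF (isCycleVertexCover_arcs_dropLast hwrap hlen)
  have hfirst := hdet.logb_card_le_sum_entT hs hF (isCycleVertexCover_arcs_dropFirst hwrap hlen)
  rw [two_mul, sum_range]
  exact (add_le_add hlast hfirst).trans_eq sum_add_distrib.symm

end Arcs

section ArcEnd

/-- The sequence `d(1) - 1, d(2), d(3), …`. Consecutive terms `b`, `b'` of it bound the arcs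
`b + 1, …, b'` on which the entropies `H_{d(1)}^{d(2)}, H_{d(2)+1}^{d(3)}, …` are taken; the paper
starts its first arc at `d(1)` rather than at `d(1) + 1`. -/
def arcEnd (d : ℕ → ℤ) : ℕ → ℤ
  | 0 => d 1 - 1
  | i + 1 => d (i + 2)

variable {d : ℕ → ℤ} {k : ℕ}

lemma arcEnd_sub_one (hk : 2 ≤ k) : arcEnd d (k - 1) = d k := by
  obtain ⟨m, rfl⟩ := Nat.exists_eq_add_of_le' hk
  rfl

lemma arcEnd_add_two_le (hstep : ∀ i, 1 ≤ i → i < k → d i + 2 ≤ d (i + 1)) :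
    ∀ i < k - 1, arcEnd d i + 2 ≤ arcEnd d (i + 1)
  | 0, hi => by
    have h : d 1 + 2 ≤ d 2 := hstep 1 le_rfl (by omega)
    have hfirst : d 1 - 1 + 2 ≤ d 2 := by omega
    exact hfirst
  | i + 1, hi => hstep (i + 2) (by omega) (by omega)

lemma sum_arcEnd {M : Type*} [AddCommMonoid M] (hk : 2 ≤ k) (h : ℤ → ℤ → M) :
    ∑ i ∈ range (k - 1), h (arcEnd d i + 1) (arcEnd d (i + 1)) =
      h (d 1) (d 2) + ∑ i ∈ Icc 2 (k - 1), h (d i + 1) (d (i + 1)) := by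
  obtain ⟨m, rfl⟩ := Nat.exists_eq_add_of_le' hk
  have hIcc : Icc 2 (m + 2 - 1) = Ico (0 + 2) (m + 2) := rfl
  rw [hIcc, ← sum_Ico_add' (fun i ↦ h (d i + 1) (d (i + 1))), ← range_eq_Ico, add_comm (h _ _)]
  simp only [Nat.add_one_sub_one, sum_range_succ', arcEnd, sub_add_cancel, zero_add]

end ArcEnd

/-- Let `n ≥ 3` and `s ≥ 2`, let `P` be a non-trivial protocol on
`C_n` with `s` colours and let `X` be uniform on `Fix(P)`.  If
`1 = d(1) < d(2) < ⋯ < d(k) = n` with `k ≥ 2` and `d(i+1) ≥ d(i) + 2` for all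
`1 ≤ i < k`, then
`2 log_s fix(P) ≤ H_{d(1)}^{d(2)} + H_{d(2)+1}^{d(3)} + ⋯ + H_{d(k-1)+1}^{d(k)}`. -/
theorem cycle_guessing_stmt4 (n s : ℕ) [NeZero n] (hn : 3 ≤ n) (hs : 2 ≤ s)
    (f : ZMod n → Fin s × Fin s → Fin s)
    (hne : (cycleFix n s f).Nonempty)
    (k : ℕ) (hk : 2 ≤ k) (d : ℕ → ℤ)
    (hd1 : d 1 = 1) (hdk : d k = (n : ℤ))
    (hstep : ∀ i : ℕ, 1 ≤ i → i < k → d i + 2 ≤ d (i + 1)) :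
    2 * Real.logb s ((cycleFix n s f).card : ℝ) ≤
      entH n s (cycleFix n s f) (d 1) (d 2) +
        ∑ i ∈ Finset.Icc 2 (k - 1), entH n s (cycleFix n s f) (d i + 1) (d (i + 1)) := by
  have hwrap : arcEnd d (k - 1) = arcEnd d 0 + n := by
    rw [arcEnd_sub_one hk, hdk, arcEnd, hd1, sub_self, zero_add]
  exact (cycle_guessing_stmt4_general hs hne (neighbourDetermined_cycleFix f) hwrap
    (arcEnd_add_two_le hstep)).trans_eq (sum_arcEnd hk _)
end

section
/- Let n ≥ 3 be an odd integer, let s ≥ 2 be an integer, let a be the greatest divisor of s with a ≤ √s and let b = s/a. Then the fractional-clique-partition protocol P_fcp on C_n with s colours satisfies fix(P_fcp) = a · s^{(n−1)/2}. -/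
open Finset

/-- First coordinate `φ(z)` of a colour under the bijection `π : Z_a × Z_b ≃ Z_s`. -/
def fcpPhi {a b s : ℕ} (π : ZMod a × ZMod b ≃ Fin s) (z : Fin s) : ZMod a :=
  (π.symm z).1

/-- Second coordinate `ψ(z)` of a colour under the bijection `π : Z_a × Z_b ≃ Z_s`. -/
def fcpPsi {a b s : ℕ} (π : ZMod a × ZMod b ≃ Fin s) (z : Fin s) : ZMod b :=
  (π.symm z).2

/-- The fractional-clique-partition protocol `P_fcp` on `C_n` (`n` odd), for a
factorisation `s = a·b` with `a ≤ b` and a bijection `π : Z_a × Z_b ≃ Z_s`.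
Vertices are the residues modulo `n`, vertex `i` of the paper corresponding to the
residue of `i` (so vertex `n` is the residue `0`).  The first argument of `f i` is
the colour of vertex `i - 1` and the second the colour of vertex `i + 1`:
* `f 1 (c_n, c_2)   = π(φ(c_2), φ(c_n))` (regarding `Z_a ⊆ Z_b` via `val`),
* `f n (c_{n-1}, c_1) = π(ψ(c_1) mod a, ψ(c_{n-1}))`,
* `f i (c_{i-1}, c_{i+1}) = π(φ(c_{i-1}), ψ(c_{i+1}))` for even `i`, `2 ≤ i ≤ n-1`,
* `f i (c_{i-1}, c_{i+1}) = π(φ(c_{i+1}), ψ(c_{i-1}))` for odd `i`, `3 ≤ i ≤ n-2`. -/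
def fcpProtocol (n s a b : ℕ) [NeZero n] (π : ZMod a × ZMod b ≃ Fin s) :
    ZMod n → Fin s × Fin s → Fin s := fun i p =>
  if i.val = 1 then π (fcpPhi π p.2, (((fcpPhi π p.1).val : ℕ) : ZMod b))
  else if i.val = 0 then π ((((fcpPsi π p.2).val : ℕ) : ZMod a), fcpPsi π p.1)
  else if i.val % 2 = 0 then π (fcpPhi π p.1, fcpPsi π p.2)
  else π (fcpPhi π p.2, fcpPsi π p.1)

/-!
Call the nonzero residues with even representative free. In a fixed colouring an odd vertex only
copies data from its neighbours, and these are free except for the neighbour `0` of `1`; vertex `0`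
copies its `ψ` from the free vertex `-1`. So a fixed colouring is determined by its free colours
together with `x = φ (c 0)`. The free colours are arbitrary, because a free vertex reads from its
neighbours exactly what they copied from it. The only constraint left is on the edge `{0, 1}`:
vertex `1` stores `x` in `Z_b` and vertex `0` reads it back into `Z_a`, so `x` has to survive
`Z_a → Z_b → Z_a`. It does iff its representative is less than `b`, which leaves `min a b` values.
-/

section Residues

lemma neZero_of_finite_zmod (n : ℕ) [Finite (ZMod n)] : NeZero n :=
  ⟨by rintro rfl; exact not_finite (ZMod 0)⟩

lemma zmod_val_add_one_of_ne_zero {n : ℕ} [NeZero n] {i : ZMod n} (h : i + 1 ≠ 0) :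
    (i + 1).val = i.val + 1 := by
  have hlt : i.val + 1 < n := by
    refine lt_of_le_of_ne i.val_lt fun heq ↦ h ?_
    rw [← ZMod.natCast_zmod_val i, ← Nat.cast_add_one, heq, ZMod.natCast_self]
  rw [← ZMod.val_cast_of_lt hlt, Nat.cast_add_one, ZMod.natCast_zmod_val]

lemma zmod_val_sub_one_of_ne_zero {n : ℕ} [NeZero n] {i : ZMod n} (h : i ≠ 0) :
    (i - 1).val + 1 = i.val := by
  rw [← zmod_val_add_one_of_ne_zero (by rwa [sub_add_cancel]), sub_add_cancel]

lemma card_zmod_filter_val (n : ℕ) [NeZero n] (p : ℕ → Prop) [DecidablePred p] :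
    #{i : ZMod n | p i.val} = #{k ∈ range n | p k} := by
  rw [← card_image_of_injective _ (ZMod.val_injective n)]
  congr 1
  ext k
  simp only [mem_image, mem_filter, mem_univ, true_and, mem_range]
  constructor
  · rintro ⟨i, hi, rfl⟩
    exact ⟨i.val_lt, hi⟩
  · rintro ⟨hk, hp⟩
    exact ⟨k, by rwa [ZMod.val_cast_of_lt hk], ZMod.val_cast_of_lt hk⟩

/-- The composite `Z_a → Z_b → Z_a` of the two coercions, through representatives, by which `P_fcp`
passes a colour component back and forth along the edge between the vertices `0` and `1`. -/
def roundTrip (a b : ℕ) (x : ZMod a) : ZMod a :=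
  (((x.val : ZMod b).val : ℕ) : ZMod a)

lemma roundTrip_eq_self_iff {a b : ℕ} [NeZero a] [NeZero b] (x : ZMod a) :
    roundTrip a b x = x ↔ x.val < b := by
  have hmod : x.val % b < a := (Nat.mod_le _ _).trans_lt x.val_lt
  rw [← (ZMod.val_injective a).eq_iff, roundTrip, ZMod.val_natCast b,
    ZMod.val_cast_of_lt hmod, Nat.mod_eq_iff_lt (NeZero.ne b)]

lemma card_filter_roundTrip_eq_self (a b : ℕ) [NeZero a] [NeZero b] :
    #{x : ZMod a | roundTrip a b x = x} = min a b := by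
  simp only [roundTrip_eq_self_iff]
  rw [card_zmod_filter_val a (· < b), ← card_range (min a b)]
  congr 1
  ext k
  simp

end Residues

section FreeVertices

variable {n : ℕ} {i : ZMod n}

lemma ne_zero_of_odd_val (hi : Odd i.val) : i ≠ 0 := by
  rintro rfl
  simp at hi

variable [NeZero n]

/-- The vertices of `C_n` (residues modulo `n`) whose colours may be prescribed arbitrarily in a
fixed colouring of `P_fcp`: the paper's vertices `2, 4, …, n - 1`. -/
def freeVertices (n : ℕ) [NeZero n] : Finset (ZMod n) :=
  {i | i ≠ 0 ∧ Even i.val}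

lemma mem_freeVertices : i ∈ freeVertices n ↔ i ≠ 0 ∧ Even i.val := by
  simp [freeVertices]

lemma card_freeVertices (n : ℕ) [NeZero n] : #(freeVertices n) = (n - 1) / 2 := by
  simp only [freeVertices, ← ZMod.val_ne_zero]
  rw [card_zmod_filter_val n (fun k ↦ k ≠ 0 ∧ Even k), ← Nat.Ioc_filter_dvd_card_eq_div]
  congr 1
  ext k
  have := NeZero.pos n
  simp only [mem_filter, mem_range, mem_Ioc, even_iff_two_dvd]
  lia

lemma zero_notMem_freeVertices : (0 : ZMod n) ∉ freeVertices n := by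
  simp [mem_freeVertices]

lemma odd_val_of_notMem_freeVertices (h0 : i ≠ 0) (hi : i ∉ freeVertices n) : Odd i.val := by
  simpa [mem_freeVertices, h0] using hi

lemma odd_val_sub_one_of_mem_freeVertices (hi : i ∈ freeVertices n) : Odd (i - 1).val := by
  obtain ⟨h0, heven⟩ := mem_freeVertices.1 hi
  rw [← zmod_val_sub_one_of_ne_zero h0] at heven
  exact Nat.not_even_iff_odd.1 (Nat.even_add_one.1 heven)

lemma odd_val_add_one_of_mem_freeVertices (hi : i ∈ freeVertices n) (h0 : i + 1 ≠ 0) :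
    Odd (i + 1).val := by
  rw [zmod_val_add_one_of_ne_zero h0]
  exact (mem_freeVertices.1 hi).2.add_one

lemma sub_one_mem_freeVertices (h1 : i ≠ 1) (hi : Odd i.val) : i - 1 ∈ freeVertices n := by
  refine mem_freeVertices.2 ⟨sub_ne_zero.2 h1, ?_⟩
  rw [← zmod_val_sub_one_of_ne_zero (ne_zero_of_odd_val hi)] at hi
  exact Nat.not_odd_iff_even.1 (Nat.odd_add_one.1 hi)

lemma add_one_mem_freeVertices (hodd : Odd n) (hi : Odd i.val) : i + 1 ∈ freeVertices n := by
  have h0 : i + 1 ≠ 0 := by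
    intro h
    obtain rfl := eq_neg_of_add_eq_zero_left h
    obtain ⟨m, rfl⟩ := hodd
    rw [ZMod.val_neg_one] at hi
    exact Nat.not_odd_iff_even.2 (even_two_mul m) hi
  refine mem_freeVertices.2 ⟨h0, ?_⟩
  rw [zmod_val_add_one_of_ne_zero h0]
  exact hi.add_one

lemma neg_one_mem_freeVertices (hn : 1 < n) (hodd : Odd n) : (-1 : ZMod n) ∈ freeVertices n := by
  have : Fact (1 < n) := ⟨hn⟩
  obtain ⟨m, rfl⟩ := hodd
  rw [mem_freeVertices, ZMod.val_neg_one]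
  exact ⟨neg_ne_zero.2 one_ne_zero, even_two_mul m⟩

end FreeVertices

section Protocol

variable {n s a b : ℕ} [NeZero n] (π : ZMod a × ZMod b ≃ Fin s)

lemma mem_cycleFix {f : ZMod n → Fin s × Fin s → Fin s} {c : ZMod n → Fin s} :
    c ∈ cycleFix n s f ↔ ∀ i, c i = f i (c (i - 1), c (i + 1)) := by
  simp [cycleFix]

@[simp]
lemma fcpPhi_apply (p : ZMod a × ZMod b) : fcpPhi π (π p) = p.1 := by
  simp [fcpPhi]

@[simp]
lemma fcpPsi_apply (p : ZMod a × ZMod b) : fcpPsi π (π p) = p.2 := by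
  simp [fcpPsi]

@[simp]
lemma apply_fcpPhi_fcpPsi (z : Fin s) : π (fcpPhi π z, fcpPsi π z) = z := by
  simp [fcpPhi, fcpPsi]

lemma fcpProtocol_zero (p : Fin s × Fin s) :
    fcpProtocol n s a b π 0 p = π (((fcpPsi π p.2).val : ZMod a), fcpPsi π p.1) := by
  simp [fcpProtocol]

lemma fcpProtocol_one [Fact (1 < n)] (p : Fin s × Fin s) :
    fcpProtocol n s a b π 1 p = π (fcpPhi π p.2, ((fcpPhi π p.1).val : ZMod b)) := by
  simp [fcpProtocol, ZMod.val_one]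

lemma fcpProtocol_of_mem_freeVertices {i : ZMod n} (hi : i ∈ freeVertices n) (p : Fin s × Fin s) :
    fcpProtocol n s a b π i p = π (fcpPhi π p.1, fcpPsi π p.2) := by
  obtain ⟨h0, heven⟩ := mem_freeVertices.1 hi
  have h1 : i.val ≠ 1 := fun h ↦ by simp [h] at heven
  simp [fcpProtocol, h0, h1, Nat.even_iff.1 heven]

lemma fcpProtocol_of_odd [Fact (1 < n)] {i : ZMod n} (h1 : i ≠ 1) (hi : Odd i.val)
    (p : Fin s × Fin s) :
    fcpProtocol n s a b π i p = π (fcpPhi π p.2, fcpPsi π p.1) := by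
  have hval : i.val ≠ 1 := (ZMod.val_eq_one Fact.out i).not.2 h1
  simp [fcpProtocol, ne_zero_of_odd_val hi, hval, Nat.odd_iff.1 hi]

lemma fcpPhi_fcpProtocol_of_odd [Fact (1 < n)] {i : ZMod n} (hi : Odd i.val) (p : Fin s × Fin s) :
    fcpPhi π (fcpProtocol n s a b π i p) = fcpPhi π p.2 := by
  rcases eq_or_ne i 1 with rfl | h1
  · simp [fcpProtocol_one]
  · simp [fcpProtocol_of_odd π h1 hi]

end Protocol

section Completion

variable {n s a b : ℕ} [NeZero n] (π : ZMod a × ZMod b ≃ Fin s)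

/-- The data that determine a fixed colouring of `P_fcp`: the component `φ` of the colour of vertex
`0` and the colours of the free vertices. -/
def fcpData (c : ZMod n → Fin s) : ZMod a × (freeVertices n → Fin s) :=
  (fcpPhi π (c 0), fun i ↦ c i)

/-- The colouring rebuilt from the data of `d`: vertex `0` keeps its `φ`, the free vertices keep
their colours, and everything else is the guess of `P_fcp`. At vertex `0` only the component `ψ` is
guessed, so that the guesses do not depend on each other. -/
def fcpCompletion (d : ZMod n → Fin s) : ZMod n → Fin s := fun i ↦
  if i = 0 then π (fcpPhi π (d 0), fcpPsi π (d (-1)))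
  else if i ∈ freeVertices n then d i
  else fcpProtocol n s a b π i (d (i - 1), d (i + 1))

variable {π} in
lemma fcpData_eq_iff {d d' : ZMod n → Fin s} :
    fcpData π d = fcpData π d' ↔
      fcpPhi π (d 0) = fcpPhi π (d' 0) ∧ ∀ i ∈ freeVertices n, d i = d' i := by
  simp [fcpData, funext_iff]

lemma fcpData_surjective : Function.Surjective (fcpData (n := n) π) := by
  rintro ⟨x, d⟩
  refine ⟨fun i ↦ if hi : i ∈ freeVertices n then d ⟨i, hi⟩ else π (x, 0), ?_⟩
  simp [fcpData, zero_notMem_freeVertices]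

lemma fcpCompletion_zero (d : ZMod n → Fin s) :
    fcpCompletion π d 0 = π (fcpPhi π (d 0), fcpPsi π (d (-1))) := by
  simp [fcpCompletion]

lemma fcpCompletion_of_mem_freeVertices (d : ZMod n → Fin s) {i : ZMod n}
    (hi : i ∈ freeVertices n) : fcpCompletion π d i = d i := by
  simp [fcpCompletion, hi, (mem_freeVertices.1 hi).1]

lemma fcpCompletion_of_odd (d : ZMod n → Fin s) {i : ZMod n} (hi : Odd i.val) :
    fcpCompletion π d i = fcpProtocol n s a b π i (d (i - 1), d (i + 1)) := by
  have hfree : i ∉ freeVertices n := fun h ↦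
    Nat.not_even_iff_odd.2 hi (mem_freeVertices.1 h).2
  simp [fcpCompletion, hfree, ne_zero_of_odd_val hi]

lemma fcpData_fcpCompletion (d : ZMod n → Fin s) :
    fcpData π (fcpCompletion π d) = fcpData π d :=
  fcpData_eq_iff.2 ⟨by simp [fcpCompletion_zero],
    fun _ hi ↦ fcpCompletion_of_mem_freeVertices π d hi⟩

lemma fcpProtocol_congr_of_odd (hn : 1 < n) (hodd : Odd n) {d d' : ZMod n → Fin s}
    (h : fcpData π d = fcpData π d') {i : ZMod n} (hi : Odd i.val) :
    fcpProtocol n s a b π i (d (i - 1), d (i + 1)) =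
      fcpProtocol n s a b π i (d' (i - 1), d' (i + 1)) := by
  have : Fact (1 < n) := ⟨hn⟩
  obtain ⟨hphi, hfree⟩ := fcpData_eq_iff.1 h
  have hsucc := hfree _ (add_one_mem_freeVertices hodd hi)
  rcases eq_or_ne i 1 with rfl | h1
  · simp only [fcpProtocol_one, sub_self, hsucc, hphi]
  · rw [hsucc, hfree _ (sub_one_mem_freeVertices h1 hi)]

lemma fcpCompletion_congr (hn : 1 < n) (hodd : Odd n) {d d' : ZMod n → Fin s}
    (h : fcpData π d = fcpData π d') : fcpCompletion π d = fcpCompletion π d' := by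
  obtain ⟨hphi, hfree⟩ := fcpData_eq_iff.1 h
  funext i
  rcases eq_or_ne i 0 with rfl | h0
  · rw [fcpCompletion_zero, fcpCompletion_zero, hphi, hfree _ (neg_one_mem_freeVertices hn hodd)]
  by_cases hi : i ∈ freeVertices n
  · simpa only [fcpCompletion_of_mem_freeVertices π _ hi] using hfree i hi
  · have hi := odd_val_of_notMem_freeVertices h0 hi
    simpa only [fcpCompletion_of_odd π _ hi] using fcpProtocol_congr_of_odd π hn hodd h hi

lemma fcpCompletion_eq_self {c : ZMod n → Fin s} (hc : c ∈ cycleFix n s (fcpProtocol n s a b π)) :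
    fcpCompletion π c = c := by
  rw [mem_cycleFix] at hc
  funext i
  rcases eq_or_ne i 0 with rfl | h0
  · have hpsi : fcpPsi π (c 0) = fcpPsi π (c (-1)) := by simp [hc 0, fcpProtocol_zero]
    rw [fcpCompletion_zero, ← hpsi, apply_fcpPhi_fcpPsi]
  by_cases hi : i ∈ freeVertices n
  · exact fcpCompletion_of_mem_freeVertices π c hi
  · rw [fcpCompletion_of_odd π c (odd_val_of_notMem_freeVertices h0 hi), ← hc i]

lemma roundTrip_fcpPhi_of_mem_cycleFix (hn : 1 < n) {c : ZMod n → Fin s}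
    (hc : c ∈ cycleFix n s (fcpProtocol n s a b π)) :
    roundTrip a b (fcpPhi π (c 0)) = fcpPhi π (c 0) := by
  have : Fact (1 < n) := ⟨hn⟩
  rw [mem_cycleFix] at hc
  have hone : fcpPsi π (c 1) = ((fcpPhi π (c 0)).val : ZMod b) := by
    rw [hc 1, fcpProtocol_one, fcpPsi_apply, sub_self]
  have hzero : fcpPhi π (c 0) = ((fcpPsi π (c 1)).val : ZMod a) := by
    rw [hc 0, fcpProtocol_zero, fcpPhi_apply, zero_add]
  rw [roundTrip, ← hone, ← hzero]

lemma fcpPsi_fcpCompletion_add_one (hn : 1 < n) (d : ZMod n → Fin s) {i : ZMod n}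
    (hi : i ∈ freeVertices n) : fcpPsi π (fcpCompletion π d (i + 1)) = fcpPsi π (d i) := by
  have : Fact (1 < n) := ⟨hn⟩
  rcases eq_or_ne (i + 1) 0 with h0 | h0
  · rw [h0, fcpCompletion_zero, fcpPsi_apply, eq_neg_of_add_eq_zero_left h0]
  · have hodd := odd_val_add_one_of_mem_freeVertices hi h0
    have h1 : i + 1 ≠ 1 := by simpa using (mem_freeVertices.1 hi).1
    rw [fcpCompletion_of_odd π d hodd, fcpProtocol_of_odd π h1 hodd, fcpPsi_apply,
      add_sub_cancel_right]

lemma fcpCompletion_mem_cycleFix (hn : 1 < n) (hodd : Odd n) {d : ZMod n → Fin s}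
    (hd : roundTrip a b (fcpPhi π (d 0)) = fcpPhi π (d 0)) :
    fcpCompletion π d ∈ cycleFix n s (fcpProtocol n s a b π) := by
  have : Fact (1 < n) := ⟨hn⟩
  refine mem_cycleFix.2 fun i ↦ ?_
  rcases eq_or_ne i 0 with rfl | h0
  · have hpsi : fcpPsi π (fcpCompletion π d 1) = ((fcpPhi π (d 0)).val : ZMod b) := by
      rw [fcpCompletion_of_odd π d (by simp [ZMod.val_one]), fcpProtocol_one, fcpPsi_apply,
        sub_self]
    have hphi : ((fcpPsi π (fcpCompletion π d 1)).val : ZMod a) = fcpPhi π (d 0) := by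
      rw [hpsi, ← roundTrip, hd]
    simp only [fcpProtocol_zero, zero_sub, zero_add, fcpCompletion_zero, hphi,
      fcpCompletion_of_mem_freeVertices π d (neg_one_mem_freeVertices hn hodd)]
  by_cases hi : i ∈ freeVertices n
  · have hphi : fcpPhi π (fcpCompletion π d (i - 1)) = fcpPhi π (d i) := by
      have hpred := odd_val_sub_one_of_mem_freeVertices hi
      rw [fcpCompletion_of_odd π d hpred, fcpPhi_fcpProtocol_of_odd π hpred, sub_add_cancel]
    rw [fcpProtocol_of_mem_freeVertices π hi, hphi, fcpPsi_fcpCompletion_add_one π hn d hi,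
      apply_fcpPhi_fcpPsi, fcpCompletion_of_mem_freeVertices π d hi]
  · have hi := odd_val_of_notMem_freeVertices h0 hi
    rw [fcpCompletion_of_odd π d hi]
    exact fcpProtocol_congr_of_odd π hn hodd (fcpData_fcpCompletion π d).symm hi

lemma fcpData_injOn_cycleFix (hn : 1 < n) (hodd : Odd n) :
    Set.InjOn (fcpData π)
      (cycleFix n s (fcpProtocol n s a b π) : Set (ZMod n → Fin s)) := by
  intro c hc c' hc' h
  rw [← fcpCompletion_eq_self π hc, fcpCompletion_congr π hn hodd h, fcpCompletion_eq_self π hc']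

lemma image_fcpData_cycleFix [NeZero a] (hn : 1 < n) (hodd : Odd n) :
    (cycleFix n s (fcpProtocol n s a b π)).image (fcpData π) =
      ({x | roundTrip a b x = x} : Finset (ZMod a)) ×ˢ univ := by
  ext p
  simp only [mem_image, mem_product, mem_filter, mem_univ, true_and, and_true]
  constructor
  · rintro ⟨c, hc, rfl⟩
    exact roundTrip_fcpPhi_of_mem_cycleFix π hn hc
  · intro hp
    obtain ⟨d, rfl⟩ := fcpData_surjective (n := n) π p
    exact ⟨fcpCompletion π d, fcpCompletion_mem_cycleFix π hn hodd hp, fcpData_fcpCompletion π d⟩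

end Completion

theorem cycle_guessing_stmt5_general (n s a b : ℕ) [NeZero n] (hn : 3 ≤ n) (hodd : Odd n)
    (π : ZMod a × ZMod b ≃ Fin s) :
    #(cycleFix n s (fcpProtocol n s a b π)) = min a b * s ^ ((n - 1) / 2) := by
  have : Finite (ZMod a × ZMod b) := Finite.of_equiv _ π.symm
  have : Finite (ZMod a) := Finite.prod_left (ZMod b)
  have : Finite (ZMod b) := Finite.prod_right (ZMod a)
  have := neZero_of_finite_zmod a
  have := neZero_of_finite_zmod b
  have hn : 1 < n := by lia
  rw [← card_image_of_injOn (fcpData_injOn_cycleFix π hn hodd), image_fcpData_cycleFix π hn hodd,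
    card_product, card_filter_roundTrip_eq_self, card_univ, Fintype.card_fun, Fintype.card_fin,
    Fintype.card_coe, card_freeVertices]

/-- Let `n ≥ 3` be odd, `s ≥ 2`, let `a` be the greatest divisor of
`s` with `a ≤ √s` (equivalently `a ∣ s`, `a² ≤ s`, and every divisor `d` of `s` with
`d² ≤ s` satisfies `d ≤ a`) and `b = s / a`.  Then for any bijection
`π : Z_a × Z_b ≃ Z_s`, the fractional-clique-partition protocol satisfies
`fix(P_fcp) = a · s^{(n-1)/2}`. -/
theorem cycle_guessing_stmt5 (n s a : ℕ) [NeZero n] (hn : 3 ≤ n) (hodd : Odd n)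
    (hs : 2 ≤ s)
    (ha : a ∣ s ∧ a * a ≤ s ∧ ∀ d : ℕ, d ∣ s → d * d ≤ s → d ≤ a)
    (π : ZMod a × ZMod (s / a) ≃ Fin s) :
    (cycleFix n s (fcpProtocol n s a (s / a) π)).card = a * s ^ ((n - 1) / 2) := by
  have hle : a ≤ s / a := (Nat.le_div_iff_mul_le (Nat.pos_of_dvd_of_pos ha.1 (by lia))).2 ha.2.1
  rw [cycle_guessing_stmt5_general n s a (s / a) hn hodd π, min_eq_left hle]
end

section
/- Let n ≥ 4 and s ≥ 2 be integers. Every protocol P on C_n with s colours satisfies fix(P)^2 ≤ s^n (equivalently, the guessing number gn(C_n, s) ≤ n/2). Moreover, if a non-trivial protocol P attains fix(P)^2 = s^n and X is uniformly distributed on Fix(P), then each coordinate X_i is uniformly distributed on Z_s (i.e. H(X_i) = 1 in base-s entropy for all i). -/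
open Finset

/-!
For `X` uniform on `Fix(P)`, the whole colouring is determined by its values on enough vertices,
because each vertex is a function of its two neighbours. Let `A` and `B` be the even and the odd
vertices among `0, …, n - 2`. Each of them determines the colours on `W = {1, …, n - 3}`, and
together they determine everything, so submodularity gives `H(X) + h(W) ≤ h(A) + h(B)`. Since `W`
and `n - 1` determine everything as well, `H(X) ≤ h(W) + h(n - 1)`. Adding these and using
subadditivity on `A` and `B`, `2 H(X) ≤ ∑ i, H(X_i) ≤ n`. As `H(X) = log_s fix(P)`, this is the
bound, and equality forces every `H(X_i)` to be maximal.
-/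

section FiberSums

variable {α β γ δ : Type*}

/-- On the finite set `F`, the value of `g` determines that of `h`; for `X` uniform on `F`, this
says that the random variable `h(X)` is a function of `g(X)`. -/
def DeterminesOn (F : Finset α) (g : α → β) (h : α → γ) : Prop :=
  ∀ c ∈ F, ∀ d ∈ F, g c = g d → h c = h d

variable [DecidableEq β] [DecidableEq γ] [DecidableEq δ]

/-- The conditional entropy `H(X | g(X))` of `X` uniform on `F`, in nats and multiplied by `#F` so
that it is additive over a partition of `F` into fibres. -/
noncomputable def logFiberSum (F : Finset α) (g : α → β) : ℝ :=
  ∑ c ∈ F, Real.log #{d ∈ F | g d = g c}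

lemma card_fiber_pos {F : Finset α} (g : α → β) {c : α} (hc : c ∈ F) :
    (0 : ℝ) < #{d ∈ F | g d = g c} :=
  mod_cast card_pos.2 ⟨c, mem_filter.2 ⟨hc, rfl⟩⟩

lemma sum_div_card_fiber (F : Finset α) (g : α → β) (φ : β → ℝ) :
    ∑ c ∈ F, φ (g c) / #{d ∈ F | g d = g c} = ∑ y ∈ F.image g, φ y := by
  rw [← sum_fiberwise_of_maps_to' (fun c => mem_image_of_mem g)
    fun y => φ y / #{d ∈ F | g d = y}]
  refine sum_congr rfl fun y hy => ?_
  obtain ⟨c, hc, rfl⟩ := mem_image.1 hy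
  rw [sum_const, nsmul_eq_mul, mul_div_cancel₀ _ (card_fiber_pos g hc).ne']

lemma logFiberSum_le_of_determinesOn {F : Finset α} {g : α → β} {h : α → γ}
    (hgh : DeterminesOn F g h) : logFiberSum F g ≤ logFiberSum F h := by
  refine sum_le_sum fun c hc => Real.log_le_log (card_fiber_pos g hc) (mod_cast card_le_card ?_)
  intro d hd
  rw [mem_filter] at hd ⊢
  exact ⟨hd.1, hgh d hd.1 c hc hd.2⟩

lemma logFiberSum_eq_sum_fiberwise {F : Finset α} {g : α → β} {k : α → γ}
    (hgk : DeterminesOn F g k) :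
    logFiberSum F g = ∑ z ∈ F.image k, logFiberSum {c ∈ F | k c = z} g := by
  rw [logFiberSum, ← sum_fiberwise_of_maps_to fun c => mem_image_of_mem k]
  refine sum_congr rfl fun z _ => sum_congr rfl fun c hc => ?_
  rw [mem_filter] at hc
  rw [filter_filter]
  congr 2
  refine congrArg card (filter_congr fun d hd => ⟨fun h => ⟨?_, h⟩, And.right⟩)
  rw [hgk d hd c hc.1 h, hc.2]

lemma logFiberSum_fiber (F : Finset α) (k : α → γ) (z : γ) :
    logFiberSum {c ∈ F | k c = z} k = #{c ∈ F | k c = z} * Real.log #{c ∈ F | k c = z} := by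
  rw [logFiberSum, ← nsmul_eq_mul, ← sum_const]
  refine sum_congr rfl fun c hc => ?_
  rw [(mem_filter.1 hc).2, filter_filter]
  simp only [and_self]

lemma logFiberSum_eq_zero_of_injOn {F : Finset α} {g : α → β} (hg : Set.InjOn g F) :
    logFiberSum F g = 0 := by
  refine sum_eq_zero fun c hc => ?_
  have fiber_eq : {d ∈ F | g d = g c} = {c} := by
    ext d
    rw [mem_filter, mem_singleton]
    exact ⟨fun hd => hg hd.1 hc hd.2, by rintro rfl; exact ⟨hc, rfl⟩⟩
  rw [fiber_eq, card_singleton, Nat.cast_one, Real.log_one]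

lemma sum_card_fiber_mul_card_fiber_div_le (F : Finset α) (g : α → β) (h : α → γ) :
    ∑ c ∈ F, (#{d ∈ F | g d = g c} * #{d ∈ F | h d = h c} : ℝ) /
      #{d ∈ F | (g d, h d) = (g c, h c)} ≤ (#F : ℝ) ^ 2 :=
  calc
    _ = ∑ y ∈ F.image fun c => (g c, h c), (#{d ∈ F | g d = y.1} * #{d ∈ F | h d = y.2} : ℝ) :=
      sum_div_card_fiber F (fun c => (g c, h c))
        fun y => (#{d ∈ F | g d = y.1} * #{d ∈ F | h d = y.2} : ℝ)
    _ ≤ ∑ y ∈ F.image g ×ˢ F.image h, (#{d ∈ F | g d = y.1} * #{d ∈ F | h d = y.2} : ℝ) := by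
      refine sum_le_sum_of_subset_of_nonneg (image_subset_iff.2 fun c hc => ?_)
        fun _ _ _ => by positivity
      exact mk_mem_product (mem_image_of_mem g hc) (mem_image_of_mem h hc)
    _ = (∑ x ∈ F.image g, (#{d ∈ F | g d = x} : ℝ)) *
        ∑ y ∈ F.image h, (#{d ∈ F | h d = y} : ℝ) := by
      rw [sum_mul_sum, sum_product]
    _ = (#F : ℝ) ^ 2 := by
      rw [← Nat.cast_sum, ← Nat.cast_sum, ← card_eq_sum_card_image, ← card_eq_sum_card_image, sq]

lemma logFiberSum_add_le (F : Finset α) (g : α → β) (h : α → γ) :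
    logFiberSum F g + logFiberSum F h ≤
      logFiberSum F (fun c => (g c, h c)) + #F * Real.log #F := by
  have log_le : ∀ c ∈ F,
      Real.log #{d ∈ F | g d = g c} + Real.log #{d ∈ F | h d = h c} -
        Real.log #{d ∈ F | (g d, h d) = (g c, h c)} - Real.log #F ≤
      (#{d ∈ F | g d = g c} * #{d ∈ F | h d = h c} : ℝ) /
        #{d ∈ F | (g d, h d) = (g c, h c)} / #F - 1 := by
    intro c hc
    have hF : (0 : ℝ) < #F := mod_cast card_pos.2 ⟨c, hc⟩
    have hg := card_fiber_pos g hc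
    have hh := card_fiber_pos h hc
    have hgh := card_fiber_pos (fun c => (g c, h c)) hc
    rw [← Real.log_mul hg.ne' hh.ne', ← Real.log_div (by positivity) hgh.ne',
      ← Real.log_div (by positivity) hF.ne']
    exact Real.log_le_sub_one_of_pos (by positivity)
  have sum_ratio_le := div_le_div_of_nonneg_right
    (sum_card_fiber_mul_card_fiber_div_le F g h) (Nat.cast_nonneg (α := ℝ) #F)
  have sum_log_le := sum_le_sum log_le
  simp only [sum_sub_distrib, sum_add_distrib, sum_const, nsmul_eq_mul, mul_one,
    ← sum_div] at sum_log_le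
  rw [sq, mul_self_div_self] at sum_ratio_le
  unfold logFiberSum
  linarith

lemma logFiberSum_add_le_of_determinesOn {F : Finset α} {g : α → β} {h : α → γ} {k : α → δ}
    (hgk : DeterminesOn F g k) (hhk : DeterminesOn F h k) :
    logFiberSum F g + logFiberSum F h ≤
      logFiberSum F (fun c => (g c, h c)) + logFiberSum F k := by
  have hpk : DeterminesOn F (fun c => (g c, h c)) k := fun c hc d hd e =>
    hgk c hc d hd (congrArg Prod.fst e)
  rw [logFiberSum_eq_sum_fiberwise hgk, logFiberSum_eq_sum_fiberwise hhk,
    logFiberSum_eq_sum_fiberwise hpk,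
    logFiberSum_eq_sum_fiberwise (g := k) (k := k) fun _ _ _ _ => id,
    ← sum_add_distrib, ← sum_add_distrib]
  refine sum_le_sum fun z _ => ?_
  rw [logFiberSum_fiber]
  exact logFiberSum_add_le _ g h

end FiberSums

section MaximumEntropy

variable {ι : Type*} [Fintype ι] [Nonempty ι] {p : ι → ℝ}

lemma negMulLog_inv (x : ℝ) : Real.negMulLog x⁻¹ = x⁻¹ * Real.log x := by
  rw [Real.negMulLog, Real.log_inv, neg_mul_neg]

lemma sum_negMulLog_le_log_card (hp : ∀ i, 0 ≤ p i) (hsum : ∑ i, p i = 1) :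
    ∑ i, Real.negMulLog (p i) ≤ Real.log (Fintype.card ι) := by
  have hι : (0 : ℝ) < Fintype.card ι := mod_cast Fintype.card_pos
  have jensen := Real.concaveOn_negMulLog.le_map_sum (t := univ) (p := p)
    (w := fun _ => (Fintype.card ι : ℝ)⁻¹) (fun _ _ => by positivity)
    (by simp [hι.ne']) fun i _ => hp i
  simp only [smul_eq_mul, ← mul_sum, hsum, mul_one, negMulLog_inv] at jensen
  exact le_of_mul_le_mul_left jensen (by positivity)

lemma sum_negMulLog_eq_log_card_iff (hp : ∀ i, 0 ≤ p i) (hsum : ∑ i, p i = 1) :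
    ∑ i, Real.negMulLog (p i) = Real.log (Fintype.card ι) ↔ ∀ i, p i = 1 / Fintype.card ι := by
  have hι : (0 : ℝ) < Fintype.card ι := mod_cast Fintype.card_pos
  have jensen := Real.strictConcaveOn_negMulLog.map_sum_eq_iff (t := univ) (p := p)
    (w := fun _ => (Fintype.card ι : ℝ)⁻¹) (fun _ _ => by positivity)
    (by simp [hι.ne']) fun i _ => hp i
  simp only [smul_eq_mul, ← mul_sum, hsum, mul_one, negMulLog_inv, mem_univ, true_imp_iff,
    mul_right_inj' (inv_ne_zero hι.ne')] at jensen
  rw [eq_comm, jensen, one_div]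

end MaximumEntropy

section Entropy

variable {α β γ δ ε : Type} [DecidableEq β] [Fintype β] [DecidableEq γ] [Fintype γ]
  [DecidableEq δ] [Fintype δ] [DecidableEq ε] [Fintype ε]

lemma entOf_eq_sum_negMulLog (b : ℕ) (F : Finset α) (g : α → β) :
    entOf b F g = (∑ y, Real.negMulLog (#{c ∈ F | g c = y} / #F)) / Real.log b := by
  simp only [entOf, Real.negMulLog, Real.logb, ← mul_div_assoc, ← sum_div, neg_mul,
    sum_neg_distrib, neg_div]

lemma entOf_eq_log_card_sub_div (b : ℕ) (F : Finset α) (g : α → β) :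
    entOf b F g = (Real.log #F - logFiberSum F g / #F) / Real.log b := by
  obtain rfl | hF := F.eq_empty_or_nonempty
  · simp [entOf]
  have hF : (#F : ℝ) ≠ 0 := mod_cast hF.card_ne_zero
  have sum_log : ∑ y, (#{c ∈ F | g c = y} : ℝ) * Real.log (#{c ∈ F | g c = y} / #F) =
      logFiberSum F g - #F * Real.log #F := by
    simp only [← nsmul_eq_mul, ← sum_const]
    rw [sum_fiberwise' F g fun y => Real.log (#{c ∈ F | g c = y} / #F), logFiberSum,
      ← sum_sub_distrib]
    exact sum_congr rfl fun c hc => Real.log_div (card_fiber_pos g hc).ne' hF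
  rw [entOf_eq_sum_negMulLog]
  simp only [Real.negMulLog, neg_mul, sum_neg_distrib, div_mul_eq_mul_div, ← sum_div, sum_log]
  field_simp
  ring

lemma entOf_nonneg (b : ℕ) (F : Finset α) (g : α → β) : 0 ≤ entOf b F g := by
  rw [entOf_eq_sum_negMulLog]
  refine div_nonneg (sum_nonneg fun y _ => Real.negMulLog_nonneg (by positivity) ?_)
    (Real.log_natCast_nonneg b)
  exact div_le_one_of_le₀ (mod_cast card_filter_le _ _) (Nat.cast_nonneg _)

lemma entOf_id [DecidableEq α] [Fintype α] (b : ℕ) (F : Finset α) :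
    entOf b F id = Real.logb b #F := by
  rw [entOf_eq_log_card_sub_div, logFiberSum_eq_zero_of_injOn Function.injective_id.injOn,
    zero_div, sub_zero, Real.logb]

lemma entOf_of_subsingleton [Subsingleton β] (b : ℕ) (F : Finset α) (g : α → β) :
    entOf b F g = 0 := by
  obtain rfl | hF := F.eq_empty_or_nonempty
  · simp [entOf]
  have hF : (#F : ℝ) ≠ 0 := mod_cast hF.card_ne_zero
  have fiber_eq (c : α) : {d ∈ F | g d = g c} = F :=
    filter_true_of_mem fun d _ => Subsingleton.elim (g d) (g c)
  simp only [entOf_eq_log_card_sub_div, logFiberSum, fiber_eq, sum_const, nsmul_eq_mul]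
  rw [mul_div_cancel_left₀ _ hF, sub_self, zero_div]

lemma entOf_le_of_determinesOn (b : ℕ) {F : Finset α} {g : α → β} {h : α → γ}
    (hgh : DeterminesOn F g h) : entOf b F h ≤ entOf b F g := by
  rw [entOf_eq_log_card_sub_div, entOf_eq_log_card_sub_div]
  refine div_le_div_of_nonneg_right ?_ (Real.log_natCast_nonneg b)
  gcongr
  exact logFiberSum_le_of_determinesOn hgh

lemma entOf_add_entOf_le (b : ℕ) {F : Finset α} {g : α → β} {h : α → γ} {k : α → δ} {l : α → ε}
    (hgk : DeterminesOn F g k) (hhk : DeterminesOn F h k)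
    (hl : DeterminesOn F (fun c => (g c, h c)) l) :
    entOf b F l + entOf b F k ≤ entOf b F g + entOf b F h := by
  grw [entOf_le_of_determinesOn b hl]
  simp only [entOf_eq_log_card_sub_div]
  rw [← add_div, ← add_div]
  refine div_le_div_of_nonneg_right ?_ (Real.log_natCast_nonneg b)
  have := div_le_div_of_nonneg_right (logFiberSum_add_le_of_determinesOn hgk hhk)
    (Nat.cast_nonneg (α := ℝ) #F)
  rw [add_div, add_div] at this
  linarith

lemma entOf_le_add (b : ℕ) {F : Finset α} {g : α → β} {h : α → γ} {l : α → ε}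
    (hl : DeterminesOn F (fun c => (g c, h c)) l) :
    entOf b F l ≤ entOf b F g + entOf b F h := by
  have submodular := entOf_add_entOf_le b (k := fun _ => ()) (fun _ _ _ _ _ => rfl)
    (fun _ _ _ _ _ => rfl) hl
  linarith [entOf_nonneg b F fun _ => ()]

lemma entOf_pi_le_sum_s6 {ι : Type} [DecidableEq ι] (b : ℕ) (F : Finset α) (X : ι → α → β)
    (T : Finset ι) :
    entOf b F (fun c (i : {x // x ∈ T}) => X i c) ≤ ∑ i ∈ T, entOf b F (X i) := by
  induction T using Finset.induction_on with
  | empty =>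
    rw [entOf_of_subsingleton, sum_empty]
  | insert i T hi ih =>
    rw [sum_insert hi]
    grw [← ih]
    refine entOf_le_add b fun c _ d _ e => funext fun j => ?_
    rw [Prod.mk.injEq, funext_iff, Subtype.forall] at e
    obtain hj | hj := mem_insert.1 j.2
    · rw [hj, e.1]
    · exact e.2 j hj

lemma sum_card_fiber_div_card {F : Finset α} (hF : F.Nonempty) (g : α → β) :
    ∑ y, (#{c ∈ F | g c = y} / #F : ℝ) = 1 := by
  have hF : (#F : ℝ) ≠ 0 := mod_cast hF.card_ne_zero
  rw [← sum_div, ← Nat.cast_sum, ← card_eq_sum_card_fiberwise fun _ _ => mem_coe.2 (mem_univ _),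
    div_self hF]

lemma entOf_le_logb_card (b : ℕ) {F : Finset α} (hF : F.Nonempty) (g : α → β) :
    entOf b F g ≤ Real.logb b (Fintype.card β) := by
  have : Nonempty β := hF.nonempty.map g
  rw [entOf_eq_sum_negMulLog]
  exact div_le_div_of_nonneg_right
    (sum_negMulLog_le_log_card (fun _ => by positivity) (sum_card_fiber_div_card hF g))
    (Real.log_natCast_nonneg b)

lemma entOf_eq_logb_card_iff {b : ℕ} (hb : 1 < b) {F : Finset α} (hF : F.Nonempty) (g : α → β) :
    entOf b F g = Real.logb b (Fintype.card β) ↔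
      ∀ y, (#{c ∈ F | g c = y} / #F : ℝ) = 1 / Fintype.card β := by
  have : Nonempty β := hF.nonempty.map g
  have log_ne_zero : Real.log b ≠ 0 := (Real.log_pos (mod_cast hb)).ne'
  rw [entOf_eq_sum_negMulLog, Real.logb, div_left_inj' log_ne_zero,
    sum_negMulLog_eq_log_card_iff (fun _ => by positivity) (sum_card_fiber_div_card hF g)]

lemma logb_card_fin {s : ℕ} (hs : 1 < s) : Real.logb s (Fintype.card (Fin s)) = 1 := by
  rw [Fintype.card_fin, Real.logb_self_eq_one (mod_cast hs)]

lemma entOf_le_one {s : ℕ} (hs : 1 < s) {F : Finset α} (hF : F.Nonempty) (g : α → Fin s) :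
    entOf s F g ≤ 1 :=
  (entOf_le_logb_card s hF g).trans_eq (logb_card_fin hs)

lemma entOf_eq_one_iff {s : ℕ} (hs : 1 < s) {F : Finset α} (hF : F.Nonempty) (g : α → Fin s) :
    entOf s F g = 1 ↔ ∀ z, (#{c ∈ F | g c = z} / #F : ℝ) = 1 / s := by
  have max_iff := entOf_eq_logb_card_iff hs hF g
  rwa [logb_card_fin hs, Fintype.card_fin] at max_iff

end Entropy

section Cycle

variable {n s : ℕ} {c d : ZMod n → Fin s}

/-- The colours of the vertices in `T`, a set of integers read modulo `n`; its entropy is the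
`h(T)` of `entT`. -/
def coloursOn (T : Finset ℤ) (c : ZMod n → Fin s) (i : {x // x ∈ T}) : Fin s :=
  c ((i.1 : ℤ) : ZMod n)

lemma coloursOn_eq_iff {T : Finset ℤ} :
    coloursOn T c = coloursOn T d ↔ ∀ k ∈ T, c (k : ZMod n) = d (k : ZMod n) := by
  rw [funext_iff, Subtype.forall]
  rfl

variable [NeZero n] {f : ZMod n → Fin s × Fin s → Fin s}

lemma cycleFix_apply_eq_of_neighbors (hc : c ∈ cycleFix n s f) (hd : d ∈ cycleFix n s f) (k : ℤ)
    (hpred : c ((k - 1 : ℤ) : ZMod n) = d ((k - 1 : ℤ) : ZMod n))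
    (hsucc : c ((k + 1 : ℤ) : ZMod n) = d ((k + 1 : ℤ) : ZMod n)) :
    c (k : ZMod n) = d (k : ZMod n) := by
  rw [cycleFix, mem_filter] at hc hd
  push_cast at hpred hsucc
  rw [hc.2, hd.2, hpred, hsucc]

lemma eq_of_mem_cycleFix_of_forall_lt (hc : c ∈ cycleFix n s f) (hd : d ∈ cycleFix n s f)
    (hn : 2 ≤ n) (h : ∀ k : ℤ, 0 ≤ k → k < n - 1 → c (k : ZMod n) = d (k : ZMod n)) : c = d := by
  have h_last : c ((n - 1 : ℤ) : ZMod n) = d ((n - 1 : ℤ) : ZMod n) := by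
    refine cycleFix_apply_eq_of_neighbors hc hd _ (h _ (by omega) (by omega)) ?_
    have h_zero := h 0 le_rfl (by omega)
    simpa using h_zero
  funext i
  have hi := ZMod.val_lt i
  rw [← ZMod.natCast_zmod_val i, ← Int.cast_natCast]
  obtain h_lt | h_eq : (i.val : ℤ) < n - 1 ∨ (i.val : ℤ) = n - 1 := by omega
  · exact h _ (by omega) h_lt
  · rw [h_eq, h_last]

lemma determinesOn_coloursOn {S T : Finset ℤ} (h : ∀ k ∈ T, k ∈ S ∨ k - 1 ∈ S ∧ k + 1 ∈ S) :
    DeterminesOn (cycleFix n s f) (coloursOn S) (coloursOn T) := by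
  intro c hc d hd e
  rw [coloursOn_eq_iff] at e ⊢
  intro k hk
  obtain hk | ⟨hpred, hsucc⟩ := h k hk
  · exact e k hk
  · exact cycleFix_apply_eq_of_neighbors hc hd k (e _ hpred) (e _ hsucc)

lemma sum_Ico_intCast (φ : ZMod n → ℝ) : ∑ k ∈ Ico (0 : ℤ) n, φ (k : ZMod n) = ∑ i, φ i := by
  refine sum_nbij' (fun k => (k : ZMod n)) (fun i => (i.val : ℤ)) (fun _ _ => mem_univ _)
    (fun i _ => ?_) (fun k hk => ?_) (fun i _ => ?_) fun _ _ => rfl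
  · exact mem_Ico.2 ⟨by omega, mod_cast ZMod.val_lt i⟩
  · rw [mem_Ico] at hk
    rw [ZMod.val_intCast, Int.emod_eq_of_lt hk.1 hk.2]
  · rw [Int.cast_natCast, ZMod.natCast_zmod_val]

lemma logb_card_cycleFix_add_entT_le (hn : 2 ≤ n) (f : ZMod n → Fin s × Fin s → Fin s) :
    Real.logb s #(cycleFix n s f) + entT n s (cycleFix n s f) (Icc 1 (n - 3)) ≤
      entT n s (cycleFix n s f) {k ∈ Ico 0 (n - 1 : ℤ) | Even k} +
        entT n s (cycleFix n s f) {k ∈ Ico 0 (n - 1 : ℤ) | ¬Even k} := by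
  rw [← entOf_id]
  refine entOf_add_entOf_le s (g := coloursOn _) (h := coloursOn _) (k := coloursOn _)
    (determinesOn_coloursOn ?_) (determinesOn_coloursOn ?_) fun c hc d hd e => ?_
  · intro k hk
    simp only [mem_Icc, mem_filter, mem_Ico, Int.even_iff] at hk ⊢
    omega
  · intro k hk
    simp only [mem_Icc, mem_filter, mem_Ico, Int.even_iff] at hk ⊢
    omega
  · rw [Prod.mk.injEq, coloursOn_eq_iff, coloursOn_eq_iff] at e
    refine eq_of_mem_cycleFix_of_forall_lt hc hd hn fun k hk₀ hk => ?_
    by_cases hk_even : Even k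
    · exact e.1 k (mem_filter.2 ⟨mem_Ico.2 ⟨hk₀, hk⟩, hk_even⟩)
    · exact e.2 k (mem_filter.2 ⟨mem_Ico.2 ⟨hk₀, hk⟩, hk_even⟩)

lemma logb_card_cycleFix_le_entT_add (hn : 4 ≤ n) (f : ZMod n → Fin s × Fin s → Fin s) :
    Real.logb s #(cycleFix n s f) ≤ entT n s (cycleFix n s f) (Icc 1 (n - 3)) +
      entOf s (cycleFix n s f) fun c => c ((n - 1 : ℤ) : ZMod n) := by
  rw [← entOf_id]
  refine entOf_le_add s (g := coloursOn _) fun c hc d hd e => ?_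
  rw [Prod.mk.injEq, coloursOn_eq_iff] at e
  obtain ⟨h_mid, h_last⟩ := e
  have h_zero : c ((0 : ℤ) : ZMod n) = d ((0 : ℤ) : ZMod n) := by
    refine cycleFix_apply_eq_of_neighbors hc hd 0 ?_ (h_mid _ (mem_Icc.2 (by omega)))
    simpa using h_last
  have h_penultimate : c ((n - 2 : ℤ) : ZMod n) = d ((n - 2 : ℤ) : ZMod n) := by
    refine cycleFix_apply_eq_of_neighbors hc hd _ (h_mid _ (mem_Icc.2 (by omega))) ?_
    rwa [show (n - 2 + 1 : ℤ) = n - 1 by ring]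
  refine eq_of_mem_cycleFix_of_forall_lt hc hd (by omega) fun k hk₀ hk => ?_
  obtain rfl | hk_mid | rfl : k = 0 ∨ k ∈ Icc 1 (n - 3 : ℤ) ∨ k = n - 2 := by
    rw [mem_Icc]
    omega
  exacts [h_zero, h_mid k hk_mid, h_penultimate]

lemma two_mul_logb_card_cycleFix_le (hn : 4 ≤ n) (f : ZMod n → Fin s × Fin s → Fin s) :
    2 * Real.logb s #(cycleFix n s f) ≤ ∑ i, entOf s (cycleFix n s f) fun c => c i := by
  set H : ℤ → ℝ := fun k => entOf s (cycleFix n s f) fun c => c (k : ZMod n)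
  have entT_le (T : Finset ℤ) : entT n s (cycleFix n s f) T ≤ ∑ k ∈ T, H k :=
    entOf_pi_le_sum_s6 s _ (fun (k : ℤ) (c : ZMod n → Fin s) => c (k : ZMod n)) T
  have submodularity := logb_card_cycleFix_add_entT_le (by omega) f
  have last_vertex : _ ≤ _ + H (n - 1) := logb_card_cycleFix_le_entT_add hn f
  have Ico_eq : Ico 0 (n : ℤ) = insert (n - 1 : ℤ) (Ico 0 (n - 1 : ℤ)) :=
    (insert_Ico_sub_one_right_eq_Ico (by omega)).symm
  calc
    2 * Real.logb s #(cycleFix n s f) ≤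
        entT n s (cycleFix n s f) {k ∈ Ico 0 (n - 1 : ℤ) | Even k} +
        entT n s (cycleFix n s f) {k ∈ Ico 0 (n - 1 : ℤ) | ¬Even k} + H (n - 1) := by
      linarith only [submodularity, last_vertex]
    _ ≤ ∑ k ∈ Ico 0 (n - 1 : ℤ), H k + H (n - 1) := by
      grw [entT_le, entT_le, sum_filter_add_sum_filter_not]
    _ = ∑ k ∈ Ico 0 (n : ℤ), H k := by
      rw [Ico_eq, sum_insert right_notMem_Ico, add_comm]
    _ = ∑ i, entOf s (cycleFix n s f) fun c => c i :=
      sum_Ico_intCast fun i => entOf s (cycleFix n s f) fun c => c i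

theorem card_cycleFix_sq_le (hn : 4 ≤ n) (hs : 1 < s) (f : ZMod n → Fin s × Fin s → Fin s) :
    #(cycleFix n s f) ^ 2 ≤ s ^ n := by
  obtain hF | hF := (cycleFix n s f).eq_empty_or_nonempty
  · simp [hF]
  have logb_sq_le : Real.logb s ((#(cycleFix n s f) : ℝ) ^ 2) ≤ n :=
    calc
      _ = 2 * Real.logb s #(cycleFix n s f) := by rw [Real.logb_pow, Nat.cast_ofNat]
      _ ≤ ∑ i, entOf s (cycleFix n s f) fun c => c i := two_mul_logb_card_cycleFix_le hn f
      _ ≤ ∑ _ : ZMod n, 1 := sum_le_sum fun i _ => entOf_le_one hs hF fun c => c i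
      _ = n := by simp
  have fix_pos : (0 : ℝ) < #(cycleFix n s f) := mod_cast hF.card_pos
  rw [Real.logb_le_iff_le_rpow (mod_cast hs) (by positivity), Real.rpow_natCast] at logb_sq_le
  exact_mod_cast logb_sq_le

theorem entOf_apply_eq_one_of_card_cycleFix_sq_eq (hn : 4 ≤ n) (hs : 1 < s)
    (hF : (cycleFix n s f).Nonempty) (hf : #(cycleFix n s f) ^ 2 = s ^ n) (i : ZMod n) :
    entOf s (cycleFix n s f) (fun c => c i) = 1 := by
  have le_one (i : ZMod n) (_ : i ∈ univ) := entOf_le_one hs hF fun c => c i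
  have sum_ge : ∑ _ : ZMod n, 1 ≤ ∑ i, entOf s (cycleFix n s f) fun c => c i :=
    calc
      ∑ _ : ZMod n, (1 : ℝ) = n := by simp
      _ = Real.logb s ((s : ℝ) ^ n) := by
        rw [Real.logb_pow, Real.logb_self_eq_one (mod_cast hs), mul_one]
      _ = Real.logb s ((#(cycleFix n s f) : ℝ) ^ 2) := by rw [← Nat.cast_pow, ← hf, Nat.cast_pow]
      _ = 2 * Real.logb s #(cycleFix n s f) := by rw [Real.logb_pow, Nat.cast_ofNat]
      _ ≤ ∑ i, entOf s (cycleFix n s f) fun c => c i := two_mul_logb_card_cycleFix_le hn f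
  exact (sum_eq_sum_iff_of_le le_one).1 ((sum_le_sum le_one).antisymm sum_ge) i (mem_univ i)

end Cycle

/-- Let `n ≥ 4` and `s ≥ 2`.  Every protocol `P` on `C_n` with `s`
colours satisfies `fix(P)² ≤ sⁿ` (equivalently `gn(C_n,s) ≤ n/2`).  Moreover, if a
non-trivial protocol attains `fix(P)² = sⁿ` and `X` is uniform on `Fix(P)`, then
every coordinate `X_i` is uniformly distributed on `Z_s`, i.e. `H(X_i) = 1` in
base-`s` entropy for all `i`. -/
theorem cycle_guessing_stmt6 (n s : ℕ) [NeZero n] (hn : 4 ≤ n) (hs : 2 ≤ s) :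
    (∀ f : ZMod n → Fin s × Fin s → Fin s, (cycleFix n s f).card ^ 2 ≤ s ^ n) ∧
      ∀ f : ZMod n → Fin s × Fin s → Fin s, (cycleFix n s f).Nonempty →
        (cycleFix n s f).card ^ 2 = s ^ n →
        ∀ i : ZMod n,
          (∀ z : Fin s,
            (((cycleFix n s f).filter fun c => c i = z).card : ℝ) /
                ((cycleFix n s f).card : ℝ) = 1 / s) ∧
          entOf s (cycleFix n s f) (fun c => c i) = 1 := by
  refine ⟨card_cycleFix_sq_le hn hs, fun f hF hf i => ?_⟩
  have entropy_eq := entOf_apply_eq_one_of_card_cycleFix_sq_eq hn hs hF hf i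
  exact ⟨(entOf_eq_one_iff hs hF _).1 entropy_eq, entropy_eq⟩
end

section
/- Let n be an odd integer, n ≥ 3, and suppose s = m^2 − t ≥ 2 for integers m ≥ 1 and t ≥ 0. Then there exists a protocol P on C_n with s colours such that fix(P) ≥ s^{n/2} · (1 − t·n/s). -/
open Finset

/-!
Let `A` be a digraph (loops allowed) on `m` vertices with `s = m² - t` arcs, and use the arcs as
colours. Each vertex of `C_n` guesses the arc from the head of its predecessor's arc to the tail of
its successor's arc. Every closed walk of length `n` in `A`, read as its sequence of arcs, is then a
fixed colouring. Of the `m ^ n` sequences of vertices, exactly `t * m ^ (n - 2)` have a non-arc at a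
given step, so by the union bound at least `m ^ n * (1 - t * n / m ^ 2)` of them are closed walks.
-/

section FunctionCounting

variable {ι κ α : Type*} [Fintype ι] [DecidableEq ι] [Fintype κ] [Fintype α]

-- Exchanging the restriction `x ∘ σ` with `y` is an involution of pairs `(x, y)`.
lemma card_filter_comp_mul_card_pow {σ : κ → ι} (hσ : σ.Injective) (S : Finset (κ → α))
    [DecidablePred fun x : ι → α => x ∘ σ ∈ S] :
    #{x : ι → α | x ∘ σ ∈ S} * Fintype.card α ^ Fintype.card κ =
      #S * Fintype.card α ^ Fintype.card ι := by
  classical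
  have extend_extend (x : ι → α) (y : κ → α) :
      Function.extend σ (x ∘ σ) (Function.extend σ y x) = x := by
    funext k
    by_cases hk : ∃ a, σ a = k
    · obtain ⟨a, rfl⟩ := hk
      simp [hσ.extend_apply]
    · simp [Function.extend_apply' _ _ _ hk]
  rw [← Fintype.card_fun, ← Fintype.card_fun, ← card_univ, ← card_univ, ← card_product,
    ← card_product]
  refine card_nbij' (fun z => (z.1 ∘ σ, Function.extend σ z.2 z.1))
    (fun z => (Function.extend σ z.1 z.2, z.2 ∘ σ)) ?_ ?_ ?_ ?_ <;>
    simp [Set.MapsTo, Set.LeftInvOn, Function.extend_comp hσ, extend_extend]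

lemma card_filter_pair_mul_card_sq [DecidableEq α] (A : Finset (α × α)) {i j : ι} (hij : i ≠ j) :
    #{x : ι → α | (x i, x j) ∈ A} * Fintype.card α ^ 2 = #A * Fintype.card α ^ Fintype.card ι := by
  have hσ : Function.Injective ![i, j] := by
    simpa [Function.Injective, Fin.forall_fin_two] using ⟨hij, hij.symm⟩
  simpa [finTwoArrowEquiv] using
    card_filter_comp_mul_card_pow hσ (A.map (finTwoArrowEquiv α).symm.toEmbedding)

end FunctionCounting

section ClosedWalks

variable {α : Type*} [Fintype α] [DecidableEq α] (n : ℕ) [NeZero n]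

/-- The closed walks of length `n` in the digraph with arc set `A`, each given by its sequence of
vertices. Their sequences of arcs are fixed colourings of `arcProtocol`. -/
def closedWalks (A : Finset (α × α)) : Finset (ZMod n → α) :=
  {x | ∀ i, (x i, x (i + 1)) ∈ A}

variable {n}

lemma mem_closedWalks {A : Finset (α × α)} {x : ZMod n → α} :
    x ∈ closedWalks n A ↔ ∀ i, (x i, x (i + 1)) ∈ A := by
  simp [closedWalks]

lemma card_compl_closedWalks_mul_card_sq_le (hn : 2 ≤ n) (A : Finset (α × α)) :
    #(closedWalks n A)ᶜ * Fintype.card α ^ 2 ≤ #Aᶜ * n * Fintype.card α ^ n := by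
  have : Fact (1 < n) := ⟨hn⟩
  let nonArcAt (i : ZMod n) : Finset (ZMod n → α) := {x | (x i, x (i + 1)) ∈ Aᶜ}
  have compl_eq : (closedWalks n A)ᶜ = univ.biUnion nonArcAt := by
    ext x
    simp [mem_closedWalks, nonArcAt]
  calc #(closedWalks n A)ᶜ * Fintype.card α ^ 2
      ≤ (∑ i, #(nonArcAt i)) * Fintype.card α ^ 2 := by
        rw [compl_eq]
        gcongr
        exact card_biUnion_le
    _ = ∑ i, #(nonArcAt i) * Fintype.card α ^ 2 := sum_mul ..
    _ = ∑ _i : ZMod n, #Aᶜ * Fintype.card α ^ n := by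
        refine sum_congr rfl fun i _ => ?_
        rw [card_filter_pair_mul_card_sq _ (by simp), ZMod.card]
    _ = #Aᶜ * n * Fintype.card α ^ n := by
        rw [sum_const, card_univ, ZMod.card, smul_eq_mul]
        ring

lemma card_pow_mul_one_sub_le_card_closedWalks [Nonempty α] (hn : 2 ≤ n) (A : Finset (α × α)) :
    (Fintype.card α : ℝ) ^ n * (1 - #Aᶜ * n / (Fintype.card α : ℝ) ^ 2) ≤ #(closedWalks n A) := by
  have compl_le :
      (#(closedWalks n A)ᶜ : ℝ) * Fintype.card α ^ 2 ≤ #Aᶜ * n * Fintype.card α ^ n :=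
    mod_cast card_compl_closedWalks_mul_card_sq_le hn A
  have add_compl : (#(closedWalks n A) : ℝ) + #(closedWalks n A)ᶜ = Fintype.card α ^ n := by
    exact_mod_cast (card_add_card_compl _).trans (by simp [ZMod.card])
  have card_pos : (0 : ℝ) < Fintype.card α := mod_cast Fintype.card_pos
  rw [← le_div_iff₀ (by positivity)] at compl_le
  calc (Fintype.card α : ℝ) ^ n * (1 - #Aᶜ * n / (Fintype.card α : ℝ) ^ 2)
      = (Fintype.card α : ℝ) ^ n - #Aᶜ * n * Fintype.card α ^ n / (Fintype.card α : ℝ) ^ 2 := by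
        ring
    _ ≤ (#(closedWalks n A) : ℝ) := by linarith

end ClosedWalks

section ArcProtocol

variable {α : Type*} {n s : ℕ} [NeZero s]

/-- The protocol whose colours name the arcs `e 0, …, e (s - 1)` of a digraph: a vertex guesses the
arc from the head of its predecessor's arc to the tail of its successor's arc. If there is no such
arc, the guess is the arbitrary value of `Function.invFun`. -/
noncomputable def arcProtocol (n : ℕ) (e : Fin s → α × α) : ZMod n → Fin s × Fin s → Fin s :=
  fun _ c => Function.invFun e ((e c.1).2, (e c.2).1)

/-- The colouring of `C_n` by the successive arcs of the closed walk with vertex sequence `x`. -/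
noncomputable def arcColouring (e : Fin s → α × α) (x : ZMod n → α) : ZMod n → Fin s :=
  fun i => Function.invFun e (x i, x (i + 1))

variable [Fintype α] [DecidableEq α] [NeZero n] {e : Fin s → α × α} {x : ZMod n → α}

lemma apply_arcColouring (hx : x ∈ closedWalks n (univ.image e)) (i : ZMod n) :
    e (arcColouring e x i) = (x i, x (i + 1)) :=
  Function.invFun_eq (by simpa using mem_closedWalks.mp hx i)

lemma arcColouring_mem_cycleFix (hx : x ∈ closedWalks n (univ.image e)) :
    arcColouring e x ∈ cycleFix n s (arcProtocol n e) := by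
  refine mem_filter.mpr ⟨mem_univ _, fun i => ?_⟩
  rw [arcProtocol, apply_arcColouring hx, apply_arcColouring hx, sub_add_cancel, arcColouring]

lemma injOn_arcColouring :
    Set.InjOn (arcColouring e) (closedWalks n (univ.image e) : Set (ZMod n → α)) := by
  intro x hx y hy hxy
  funext i
  have arcs_eq : (x i, x (i + 1)) = (y i, y (i + 1)) := by
    rw [← apply_arcColouring hx, hxy, apply_arcColouring hy]
  exact congrArg Prod.fst arcs_eq

lemma card_closedWalks_le_card_cycleFix (e : Fin s → α × α) :
    #(closedWalks n (univ.image e)) ≤ #(cycleFix n s (arcProtocol n e)) :=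
  card_le_card_of_injOn _ (fun _ => arcColouring_mem_cycleFix) injOn_arcColouring

end ArcProtocol

lemma rpow_mul_one_sub_div_le_max {a b r u : ℝ} (ha : 0 < a) (hab : a ≤ b) (hr : 0 ≤ r)
    (hu : 0 ≤ u) : a ^ r * (1 - u / a) ≤ max 0 (b ^ r * (1 - u / b)) := by
  rcases le_total (1 - u / a) 0 with hneg | hnonneg
  · exact le_max_of_le_left (mul_nonpos_of_nonneg_of_nonpos (by positivity) hneg)
  · have : 0 < b := ha.trans_le hab
    exact le_max_of_le_right (by gcongr)

theorem cycle_guessing_stmt7_general (n s m t : ℕ) [NeZero n] (hn : 2 ≤ n) (hst : s + t = m ^ 2)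
    (hs : 0 < s) :
    ∃ f : ZMod n → Fin s × Fin s → Fin s,
      ((cycleFix n s f).card : ℝ) ≥
        (s : ℝ) ^ ((n : ℝ) / 2) * (1 - (t : ℝ) * (n : ℝ) / (s : ℝ)) := by
  have : NeZero s := ⟨hs.ne'⟩
  have : NeZero m := ⟨by rintro rfl; omega⟩
  have card_pairs : Fintype.card (Fin m × Fin m) = s + t := by simp [hst, sq]
  obtain ⟨e⟩ : Nonempty (Fin s ↪ Fin m × Fin m) :=
    Function.Embedding.nonempty_of_card_le (by simp [card_pairs])
  have card_nonArcs : #(univ.image e)ᶜ = t := by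
    rw [card_compl, card_image_of_injective _ e.injective, card_pairs]
    simp
  have walks_le := card_pow_mul_one_sub_le_card_closedWalks hn (univ.image e)
  rw [card_nonArcs, Fintype.card_fin] at walks_le
  have sq_rpow : ((m : ℝ) ^ 2) ^ ((n : ℝ) / 2) = (m : ℝ) ^ n := by
    rw [← Real.rpow_natCast_mul m.cast_nonneg, Nat.cast_ofNat, mul_div_cancel₀ _ two_ne_zero,
      Real.rpow_natCast]
  have s_le : (s : ℝ) ≤ (m : ℝ) ^ 2 := mod_cast hst ▸ Nat.le_add_right s t
  refine ⟨arcProtocol n e, ?_⟩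
  calc (s : ℝ) ^ ((n : ℝ) / 2) * (1 - t * n / s)
      ≤ max 0 ((m : ℝ) ^ n * (1 - t * n / (m : ℝ) ^ 2)) := by
        rw [← sq_rpow]
        exact rpow_mul_one_sub_div_le_max (mod_cast hs) s_le (by positivity) (by positivity)
    _ ≤ #(closedWalks n (univ.image e)) := max_le (Nat.cast_nonneg _) walks_le
    _ ≤ #(cycleFix n s (arcProtocol n e)) := mod_cast card_closedWalks_le_card_cycleFix e

/-- Let `n ≥ 3` be odd and suppose `s = m² − t ≥ 2` for integers
`m ≥ 1` and `t ≥ 0` (expressed as `s + t = m²`).  Then there exists a protocol `P`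
on `C_n` with `s` colours such that `fix(P) ≥ s^{n/2} · (1 − t·n/s)`, where
`s^{n/2}` denotes the real power. -/
theorem cycle_guessing_stmt7 (n s m t : ℕ) [NeZero n] (hn : 3 ≤ n) (hodd : Odd n)
    (hm : 1 ≤ m) (hst : s + t = m ^ 2) (hs : 2 ≤ s) :
    ∃ f : ZMod n → Fin s × Fin s → Fin s,
      ((cycleFix n s f).card : ℝ) ≥
        (s : ℝ) ^ ((n : ℝ) / 2) * (1 - (t : ℝ) * (n : ℝ) / (s : ℝ)) :=
  cycle_guessing_stmt7_general n s m t (by omega) hst (by omega)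
end

section
/- For every integer s ≥ 2 there exists a constant ε > 0 with the following property. Let δ₁ = (1/2) · min{ I(U_1; U_2 | f(U)) : f : Z_s × Z_s → Z_s is flat but not semi-perfect }, where U = (U_1, U_2) is uniformly distributed on Z_s × Z_s; this set of functions is non-empty (e.g. f(x,y) = x + y mod s), so δ₁ is well-defined and δ₁ > 0. Then for any function f : Z_s × Z_s → Z_s that is not semi-perfect and any three (s, ε)-uniform random variables Y_1, Y_2, Y_3 with values in Z_s satisfying Y_2 = f(Y_1, Y_3), if the pair (Y_1, Y_3) is (s², ε)-uniform, then I(Y_1; Y_3 | Y_2) ≥ δ₁. -/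
open Finset

/-- Base-`s` Shannon entropy of `g(U)` where `U` is distributed on the finite type
`α` with probability mass function `q`. -/
noncomputable def pEnt (s : ℕ) {α β : Type} [Fintype α] [DecidableEq β] [Fintype β]
    (q : α → ℝ) (g : α → β) : ℝ :=
  -∑ y : β, (∑ x ∈ Finset.univ.filter fun x => g x = y, q x) *
      Real.logb s (∑ x ∈ Finset.univ.filter fun x => g x = y, q x)

/-- The conditional mutual information `I(U₁; U₂ | f(U))` (base `s`), where the pair
`U = (U₁, U₂)` has joint probability mass function `q` on `Z_s × Z_s`, computed via
`I(A;B|C) = H(A,C) + H(B,C) − H(A,B,C) − H(C)`. -/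
noncomputable def condMI (s : ℕ) (f : Fin s × Fin s → Fin s)
    (q : Fin s × Fin s → ℝ) : ℝ :=
  pEnt s q (fun u => (u.1, f u)) + pEnt s q (fun u => (u.2, f u))
    - pEnt s q (fun u => (u.1, u.2, f u)) - pEnt s q f

/-- The uniform probability mass function on `Z_s × Z_s`. -/
noncomputable def unifPair (s : ℕ) : Fin s × Fin s → ℝ := fun _ => 1 / (s ^ 2 : ℝ)

/-- A function `f : Z_s × Z_s → Z_s` is flat if every fibre has exactly `s` elements. -/
def IsFlat (s : ℕ) (f : Fin s × Fin s → Fin s) : Prop :=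
  ∀ z : Fin s, (Finset.univ.filter fun u => f u = z).card = s

/-- A function `f : Z_s × Z_s → Z_s` is semi-perfect if it is flat and, for
`U = (U₁,U₂)` uniform on `Z_s × Z_s`, `I(U₁; U₂ | f(U)) = 0`. -/
def IsSemiPerfect (s : ℕ) (f : Fin s × Fin s → Fin s) : Prop :=
  IsFlat s f ∧ condMI s f (unifPair s) = 0

/-- `δ₁(s) = (1/2)·min { I(U₁;U₂|f(U)) : f flat but not semi-perfect }`, where `U` is
uniform on `Z_s × Z_s`. -/
noncomputable def delta1 (s : ℕ) : ℝ :=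
  (1 / 2) * sInf {x : ℝ | ∃ f : Fin s × Fin s → Fin s,
    IsFlat s f ∧ ¬ IsSemiPerfect s f ∧ x = condMI s f (unifPair s)}

/-!
Near the uniform distribution `condMI s f` is continuous, so its value at a flat but not
semi-perfect `f`, which is at least `2 * delta1 s` at the uniform distribution, stays above
`delta1 s`; as there are finitely many `f`, one radius serves them all. A function that is not flat
has a fibre whose uniform mass is a multiple of `1 / s ^ 2` other than `1 / s`, hence at distance at
least `1 / s ^ 2` from it, which is incompatible with both `(Y₁, Y₃)` and `Y₂` being almost uniform.
Conditional mutual information is nonnegative, and it is nonzero at a flat function that is not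
semi-perfect, so `delta1 s` is half the minimum of a finite set of positive numbers.
-/

section Marginal

variable {Ω α β γ : Type*} [Fintype Ω] [DecidableEq α] [DecidableEq β] [DecidableEq γ]

/-- The mass function of `g(U)`, where `U` has mass function `q`; the total mass of `q` is
arbitrary. -/
def marginal (q : Ω → ℝ) (g : Ω → β) (y : β) : ℝ :=
  ∑ x with g x = y, q x

lemma marginal_nonneg {q : Ω → ℝ} (hq : ∀ x, 0 ≤ q x) (g : Ω → β) (y : β) :
    0 ≤ marginal q g y :=
  sum_nonneg fun x _ => hq x

lemma le_marginal_apply {q : Ω → ℝ} (hq : ∀ x, 0 ≤ q x) (g : Ω → β) (x : Ω) :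
    q x ≤ marginal q g (g x) :=
  single_le_sum (fun x _ => hq x) (by simp)

lemma marginal_const (r : ℝ) (g : Ω → β) (y : β) :
    marginal (fun _ => r) g y = #{x | g x = y} * r := by
  simp only [marginal, sum_const, nsmul_eq_mul]

lemma sum_marginal_mul [Fintype β] (q : Ω → ℝ) (g : Ω → β) (F : β → ℝ) :
    ∑ y, marginal q g y * F y = ∑ x, q x * F (g x) := by
  rw [← sum_fiberwise univ g]
  refine sum_congr rfl fun y _ => ?_
  rw [marginal, sum_mul]
  exact sum_congr rfl fun x hx => by rw [(mem_filter.1 hx).2]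

lemma sum_marginal [Fintype β] (q : Ω → ℝ) (g : Ω → β) :
    ∑ y, marginal q g y = ∑ x, q x :=
  sum_fiberwise univ g q

lemma sum_marginal_prodMk [Fintype α] (q : Ω → ℝ) (a : Ω → α) (c : Ω → γ) (z : γ) :
    ∑ x, marginal q (fun u => (a u, c u)) (x, z) = marginal q c z := by
  simp only [marginal, Prod.mk.injEq]
  rw [← sum_fiberwise (univ.filter fun u => c u = z) a]
  simp only [filter_filter, and_comm]

lemma sum_marginal_mul_marginal_div [Fintype α] [Fintype β] [Fintype γ] (q : Ω → ℝ)
    (a : Ω → α) (b : Ω → β) (c : Ω → γ) :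
    ∑ p : α × β × γ, marginal q (fun u => (a u, c u)) (p.1, p.2.2) *
      marginal q (fun u => (b u, c u)) p.2 / marginal q c p.2.2 = ∑ u, q u := by
  calc
    _ = ∑ z, (∑ x, marginal q (fun u => (a u, c u)) (x, z)) *
          (∑ y, marginal q (fun u => (b u, c u)) (y, z)) / marginal q c z := by
      simp only [Fintype.sum_prod_type, sum_mul_sum, sum_div]
      rw [sum_comm_cycle]
    _ = ∑ z, marginal q c z := by
      simp only [sum_marginal_prodMk, mul_self_div_self]
    _ = ∑ u, q u := sum_marginal q c

lemma sum_mul_marginal_ratio_le [Finite α] [Finite β] [Finite γ] {q : Ω → ℝ}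
    (hq : ∀ u, 0 ≤ q u) (a : Ω → α) (b : Ω → β) (c : Ω → γ) :
    ∑ u, q u * (marginal q (fun u => (a u, c u)) (a u, c u) *
      marginal q (fun u => (b u, c u)) (b u, c u) /
        (marginal q (fun u => (a u, b u, c u)) (a u, b u, c u) * marginal q c (c u))) ≤
      ∑ u, q u := by
  cases nonempty_fintype α
  cases nonempty_fintype β
  cases nonempty_fintype γ
  rw [← sum_marginal_mul_marginal_div q a b c,
    ← sum_marginal_mul q (fun u => (a u, b u, c u)) fun p =>
      marginal q (fun u => (a u, c u)) (p.1, p.2.2) * marginal q (fun u => (b u, c u)) p.2 /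
        (marginal q (fun u => (a u, b u, c u)) p * marginal q c p.2.2)]
  refine sum_le_sum fun p _ => ?_
  have hABC := marginal_nonneg hq (fun u => (a u, b u, c u)) p
  have hAC := marginal_nonneg hq (fun u => (a u, c u)) (p.1, p.2.2)
  have hBC := marginal_nonneg hq (fun u => (b u, c u)) p.2
  have hC := marginal_nonneg hq c p.2.2
  rcases hABC.eq_or_lt with h0 | hpos
  · rw [← h0, zero_mul]
    positivity
  · rw [← mul_div_assoc, mul_div_mul_left _ _ hpos.ne']

end Marginal

section Entropy

lemma sum_mul_log_nonpos {ι : Type*} {t : Finset ι} {w r : ι → ℝ} (hw : ∀ i ∈ t, 0 ≤ w i)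
    (hr : ∀ i ∈ t, 0 < w i → 0 < r i) (h : ∑ i ∈ t, w i * r i ≤ ∑ i ∈ t, w i) :
    ∑ i ∈ t, w i * Real.log (r i) ≤ 0 := by
  have hlog : ∀ i ∈ t, w i * Real.log (r i) ≤ w i * r i - w i := fun i hi => by
    rcases (hw i hi).eq_or_lt with h0 | hpos
    · simp [← h0]
    · rw [← mul_sub_one]
      exact mul_le_mul_of_nonneg_left (Real.log_le_sub_one_of_pos (hr i hi hpos)) hpos.le
  have hsum := sum_le_sum hlog
  rw [sum_sub_distrib] at hsum
  linarith

variable {Ω α β γ : Type} [Fintype Ω] [DecidableEq α] [Fintype α] [DecidableEq β] [Fintype β]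
  [DecidableEq γ] [Fintype γ]

lemma pEnt_eq_neg_sum_mul_logb_marginal (s : ℕ) (q : Ω → ℝ) (g : Ω → β) :
    pEnt s q g = -∑ x, q x * Real.logb s (marginal q g (g x)) :=
  congrArg Neg.neg (sum_marginal_mul q g fun y => Real.logb s (marginal q g y))

lemma continuous_pEnt (s : ℕ) (g : Ω → β) : Continuous fun q : Ω → ℝ => pEnt s q g := by
  have hmass (y : β) : Continuous fun q : Ω → ℝ => marginal q g y := by
    unfold marginal
    fun_prop
  have hterm (y : β) :
      Continuous fun q : Ω → ℝ => marginal q g y * Real.logb s (marginal q g y) := by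
    simpa only [Real.logb, Function.comp_def, mul_div_assoc] using
      (Real.continuous_mul_log.comp (hmass y)).div_const (Real.log s)
  exact (continuous_finsetSum _ fun y _ => hterm y).neg

theorem pEnt_submodular (s : ℕ) {q : Ω → ℝ} (hq : ∀ u, 0 ≤ q u) (a : Ω → α) (b : Ω → β)
    (c : Ω → γ) :
    pEnt s q (fun u => (a u, b u, c u)) + pEnt s q c ≤
      pEnt s q (fun u => (a u, c u)) + pEnt s q (fun u => (b u, c u)) := by
  set A : Ω → ℝ := fun u => marginal q (fun u => (a u, c u)) (a u, c u)
  set B : Ω → ℝ := fun u => marginal q (fun u => (b u, c u)) (b u, c u)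
  set M : Ω → ℝ := fun u => marginal q (fun u => (a u, b u, c u)) (a u, b u, c u)
  set C : Ω → ℝ := fun u => marginal q c (c u)
  have hA (u : Ω) (hu : 0 < q u) : 0 < A u := hu.trans_le (le_marginal_apply hq _ u)
  have hB (u : Ω) (hu : 0 < q u) : 0 < B u := hu.trans_le (le_marginal_apply hq _ u)
  have hM (u : Ω) (hu : 0 < q u) : 0 < M u := hu.trans_le (le_marginal_apply hq _ u)
  have hC (u : Ω) (hu : 0 < q u) : 0 < C u := hu.trans_le (le_marginal_apply hq _ u)
  have hlog : ∑ u, q u * Real.log (A u * B u / (M u * C u)) ≤ 0 :=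
    sum_mul_log_nonpos (fun u _ => hq u)
      (fun u _ hu => div_pos (mul_pos (hA u hu) (hB u hu)) (mul_pos (hM u hu) (hC u hu)))
      (sum_mul_marginal_ratio_le hq a b c)
  have hsplit (u : Ω) : q u * Real.log (A u * B u / (M u * C u)) / Real.log s =
      q u * Real.logb s (A u) + q u * Real.logb s (B u) -
        (q u * Real.logb s (M u) + q u * Real.logb s (C u)) := by
    rcases (hq u).eq_or_lt with h0 | hu
    · simp [← h0]
    · rw [Real.log_div (mul_pos (hA u hu) (hB u hu)).ne' (mul_pos (hM u hu) (hC u hu)).ne',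
        Real.log_mul (hA u hu).ne' (hB u hu).ne', Real.log_mul (hM u hu).ne' (hC u hu).ne']
      simp only [Real.logb]
      ring
  have hlogb := div_nonpos_of_nonpos_of_nonneg hlog (Real.log_natCast_nonneg s)
  simp only [sum_div, hsplit, sum_sub_distrib, sum_add_distrib] at hlogb
  simp only [pEnt_eq_neg_sum_mul_logb_marginal]
  linarith

end Entropy

section ConditionalMutualInformation

variable {s : ℕ} {f : Fin s × Fin s → Fin s}

lemma continuous_condMI (s : ℕ) (f : Fin s × Fin s → Fin s) : Continuous (condMI s f) :=
  (((continuous_pEnt s _).add (continuous_pEnt s _)).sub (continuous_pEnt s _)).sub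
    (continuous_pEnt s _)

lemma condMI_nonneg (f : Fin s × Fin s → Fin s) {q : Fin s × Fin s → ℝ} (hq : ∀ u, 0 ≤ q u) :
    0 ≤ condMI s f q := by
  have := pEnt_submodular s hq Prod.fst Prod.snd f
  unfold condMI
  linarith

lemma pEnt_unifPair_of_card_fiber {β : Type} [DecidableEq β] [Fintype β] (hs : 1 < s)
    {g : Fin s × Fin s → β} {k : ℕ} (hk : k ≠ 0) (hg : ∀ u, #{v | g v = g u} = k) :
    pEnt s (unifPair s) g = 2 - Real.logb s k := by
  have hs1 : (1 : ℝ) < s := mod_cast hs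
  have hs0 : (s : ℝ) ≠ 0 := by positivity
  have hfiber (u : Fin s × Fin s) :
      Real.logb s (marginal (unifPair s) g (g u)) = Real.logb s k - 2 := by
    unfold unifPair
    rw [marginal_const, hg, mul_one_div, Real.logb_div (mod_cast hk) (pow_ne_zero 2 hs0),
      Real.logb_pow, Real.logb_self_eq_one hs1]
    norm_num
  simp only [pEnt_eq_neg_sum_mul_logb_marginal, hfiber, unifPair, sum_const, card_univ,
    Fintype.card_prod, Fintype.card_fin, nsmul_eq_mul, Nat.cast_mul]
  field_simp
  ring

lemma pEnt_unifPair_of_injective {β : Type} [DecidableEq β] [Fintype β] (hs : 1 < s)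
    {g : Fin s × Fin s → β} (hg : Function.Injective g) : pEnt s (unifPair s) g = 2 := by
  simpa using pEnt_unifPair_of_card_fiber hs one_ne_zero fun u => by
    simp [hg.eq_iff, filter_eq']

lemma IsFlat.pEnt_unifPair (hs : 1 < s) (hf : IsFlat s f) : pEnt s (unifPair s) f = 1 := by
  rw [pEnt_unifPair_of_card_fiber hs (by lia) fun u => hf (f u),
    Real.logb_self_eq_one (mod_cast hs)]
  norm_num

lemma isFlat_of_injective_fst_prodMk (hf : Function.Injective fun u => (u.1, f u)) :
    IsFlat s f := fun z => by
  have hcard : #{u | f u = z} = #((univ : Finset (Fin s)) ×ˢ {z}) :=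
    card_bijective _ (Finite.injective_iff_bijective.1 hf) fun u => by simp [eq_comm]
  simpa using hcard

lemma condMI_unifPair_of_injective (hs : 1 < s) (h₁ : Function.Injective fun u => (u.1, f u))
    (h₂ : Function.Injective fun u => (u.2, f u)) : condMI s f (unifPair s) = 1 := by
  have h₃ : Function.Injective fun u : Fin s × Fin s => (u.1, u.2, f u) := fun u v h => by
    simp_all [Prod.ext_iff]
  rw [condMI, pEnt_unifPair_of_injective hs h₁, pEnt_unifPair_of_injective hs h₂,
    pEnt_unifPair_of_injective hs h₃, (isFlat_of_injective_fst_prodMk h₁).pEnt_unifPair hs]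
  norm_num

lemma exists_isFlat_not_isSemiPerfect (hs : 1 < s) :
    ∃ f : Fin s × Fin s → Fin s, IsFlat s f ∧ ¬ IsSemiPerfect s f := by
  have : NeZero s := ⟨by lia⟩
  have h₁ : Function.Injective fun u : Fin s × Fin s => (u.1, u.1 + u.2) := fun u v h => by
    rw [Prod.mk.injEq] at h
    exact Prod.ext h.1 (add_left_cancel (h.2.trans (congrArg (· + _) h.1.symm)))
  have h₂ : Function.Injective fun u : Fin s × Fin s => (u.2, u.1 + u.2) := fun u v h => by
    rw [Prod.mk.injEq] at h
    exact Prod.ext (add_right_cancel (h.2.trans (congrArg _ h.1.symm))) h.1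
  refine ⟨fun u => u.1 + u.2, isFlat_of_injective_fst_prodMk h₁, fun h => ?_⟩
  exact one_ne_zero ((condMI_unifPair_of_injective hs h₁ h₂).symm.trans h.2)

end ConditionalMutualInformation

section Gap

variable {s : ℕ} {f : Fin s × Fin s → Fin s}

/-- The values `I(U₁; U₂ | f(U))`, for `U` uniform, at the flat but not semi-perfect `f`: the set
whose minimum is `2 * delta1 s`. -/
def flatMIValues (s : ℕ) : Set ℝ :=
  {x | ∃ f : Fin s × Fin s → Fin s,
    IsFlat s f ∧ ¬ IsSemiPerfect s f ∧ x = condMI s f (unifPair s)}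

lemma flatMIValues_finite (s : ℕ) : (flatMIValues s).Finite :=
  (Set.finite_range fun f => condMI s f (unifPair s)).subset fun _ ⟨f, _, _, hx⟩ => ⟨f, hx.symm⟩

lemma flatMIValues_nonempty (hs : 1 < s) : (flatMIValues s).Nonempty :=
  let ⟨f, hf, hn⟩ := exists_isFlat_not_isSemiPerfect hs
  ⟨_, f, hf, hn, rfl⟩

lemma pos_of_mem_flatMIValues {x : ℝ} (hx : x ∈ flatMIValues s) : 0 < x := by
  obtain ⟨f, hf, hn, rfl⟩ := hx
  have hnonneg : 0 ≤ condMI s f (unifPair s) :=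
    condMI_nonneg f fun _ => by unfold unifPair; positivity
  exact hnonneg.lt_of_ne fun h => hn ⟨hf, h.symm⟩

lemma delta1_pos (hs : 1 < s) : 0 < delta1 s :=
  mul_pos one_half_pos <| pos_of_mem_flatMIValues <|
    (flatMIValues_nonempty hs).csInf_mem (flatMIValues_finite s)

lemma delta1_lt_condMI_unifPair (hf : IsFlat s f) (hn : ¬ IsSemiPerfect s f) :
    delta1 s < condMI s f (unifPair s) := by
  have hmem : condMI s f (unifPair s) ∈ flatMIValues s := ⟨f, hf, hn, rfl⟩
  have hle : sInf (flatMIValues s) ≤ condMI s f (unifPair s) :=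
    csInf_le (flatMIValues_finite s).bddBelow hmem
  have hpos := pos_of_mem_flatMIValues hmem
  change 1 / 2 * sInf (flatMIValues s) < _
  linarith

lemma eventually_delta1_lt_condMI (s : ℕ) :
    ∀ᶠ q in nhds (unifPair s), ∀ f, IsFlat s f → ¬ IsSemiPerfect s f → delta1 s < condMI s f q := by
  simp only [Filter.eventually_all]
  exact fun f hf hn =>
    (continuous_condMI s f).continuousAt.eventually_const_lt (delta1_lt_condMI_unifPair hf hn)

lemma abs_sum_sub_card_mul_le {ι : Type*} {t : Finset ι} {q : ι → ℝ} {c ε : ℝ}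
    (h : ∀ i ∈ t, |q i - c| ≤ ε) : |∑ i ∈ t, q i - #t * c| ≤ #t * ε := by
  rw [← nsmul_eq_mul, ← nsmul_eq_mul, ← sum_const, ← sum_sub_distrib, ← sum_const]
  exact (abs_sum_le_sum_abs _ _).trans (sum_le_sum h)

lemma isFlat_of_abs_sub_le {q : Fin s × Fin s → ℝ} {ε : ℝ}
    (hε : (s : ℝ) ^ 2 * (s ^ 2 + 1) * ε < 1) (hq : ∀ u, |q u - 1 / (s : ℝ) ^ 2| ≤ ε)
    (hf : ∀ z, |marginal q f z - 1 / (s : ℝ)| ≤ ε) : IsFlat s f := fun z => by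
  have hs : (0 : ℝ) < s := mod_cast z.pos
  have hε0 : 0 ≤ ε := (abs_nonneg _).trans (hf z)
  have hcard : (#{u | f u = z} : ℝ) ≤ s ^ 2 := by
    have := card_le_univ ({u | f u = z} : Finset (Fin s × Fin s))
    rw [Fintype.card_prod, Fintype.card_fin, ← sq] at this
    exact mod_cast this
  set k := #{u | f u = z}
  have hmass : |k * (1 / (s : ℝ) ^ 2) - marginal q f z| ≤ k * ε := by
    rw [abs_sub_comm]
    exact abs_sum_sub_card_mul_le fun u _ => hq u
  have hdist : |k * (1 / (s : ℝ) ^ 2) - 1 / (s : ℝ)| ≤ (s ^ 2 + 1) * ε := by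
    linarith [abs_sub_le (k * (1 / (s : ℝ) ^ 2)) (marginal q f z) (1 / s), hf z,
      mul_le_mul_of_nonneg_right hcard hε0]
  have hlt : |(k : ℝ) - s| < 1 := by
    calc |(k : ℝ) - s| = (s : ℝ) ^ 2 * |k * (1 / (s : ℝ) ^ 2) - 1 / (s : ℝ)| := by
          rw [← abs_of_pos (pow_pos hs 2), ← abs_mul, abs_of_pos (pow_pos hs 2)]
          congr 1
          field_simp
      _ ≤ (s : ℝ) ^ 2 * ((s ^ 2 + 1) * ε) := by gcongr
      _ < 1 := by rwa [← mul_assoc]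
  have hint : |(k : ℤ) - s| < 1 := mod_cast hlt
  exact Nat.cast_injective (sub_eq_zero.1 (Int.abs_lt_one_iff.1 hint))

end Gap

/-- For every integer `s ≥ 2` there is a constant `ε > 0` with the
following property.  The set of values `I(U₁;U₂|f(U))` over flat but not semi-perfect
`f` is non-empty, so `δ₁ = δ₁(s)` is well-defined, and `δ₁ > 0`.  For any
non-semi-perfect `f : Z_s × Z_s → Z_s` and any `(s,ε)`-uniform random variables
`Y₁, Y₂, Y₃` with values in `Z_s` (given by a joint pmf `q` of `(Y₁, Y₃)`, with
`Y₂ = f(Y₁, Y₃)`), if the pair `(Y₁, Y₃)` is `(s², ε)`-uniform, then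
`I(Y₁; Y₃ | Y₂) ≥ δ₁`. -/
theorem cycle_guessing_stmt9 (s : ℕ) (hs : 2 ≤ s) :
    ∃ ε : ℝ, 0 < ε ∧
      ({x : ℝ | ∃ f : Fin s × Fin s → Fin s,
          IsFlat s f ∧ ¬ IsSemiPerfect s f ∧ x = condMI s f (unifPair s)}.Nonempty) ∧
      0 < delta1 s ∧
      ∀ f : Fin s × Fin s → Fin s, ¬ IsSemiPerfect s f →
        ∀ q : Fin s × Fin s → ℝ, (∀ u, 0 ≤ q u) → (∑ u, q u) = 1 →
          (∀ z : Fin s,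
            |(∑ u ∈ Finset.univ.filter fun u : Fin s × Fin s => u.1 = z, q u)
              - 1 / (s : ℝ)| ≤ ε) →
          (∀ z : Fin s,
            |(∑ u ∈ Finset.univ.filter fun u : Fin s × Fin s => f u = z, q u)
              - 1 / (s : ℝ)| ≤ ε) →
          (∀ z : Fin s,
            |(∑ u ∈ Finset.univ.filter fun u : Fin s × Fin s => u.2 = z, q u)
              - 1 / (s : ℝ)| ≤ ε) →
          (∀ u : Fin s × Fin s, |q u - 1 / (s ^ 2 : ℝ)| ≤ ε) →
          delta1 s ≤ condMI s f q := by
  obtain ⟨r, hr, hball⟩ :=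
    Metric.nhds_basis_closedBall.eventually_iff.1 (eventually_delta1_lt_condMI s)
  obtain ⟨η, hη, hηs⟩ := exists_pos_mul_lt one_pos ((s : ℝ) ^ 2 * (s ^ 2 + 1))
  have hsmall : (s : ℝ) ^ 2 * (s ^ 2 + 1) * min r η < 1 :=
    (mul_le_mul_of_nonneg_left (min_le_right r η) (by positivity)).trans_lt hηs
  refine ⟨min r η, lt_min hr hη, flatMIValues_nonempty hs, delta1_pos hs, ?_⟩
  intro f hn q _ _ _ hY₂ _ hq
  have hflat : IsFlat s f := isFlat_of_abs_sub_le hsmall hq hY₂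
  have hdist : q ∈ Metric.closedBall (unifPair s) r :=
    (dist_pi_le_iff hr.le).2 fun u => (hq u).trans (min_le_left r η)
  exact (hball hdist f hflat hn).le
end
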